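/- arXiv:1809.06931 — 5 statements merged into one kernel-verified Lean document; each statement's English description precedes it below -/
import Mathlib

section
/- For every odd prime q there exists a (q + 1)-partite hypergraph H with matching number ν(H) = 2 and vertex cover number τ(H) = 2q such that H does not contain two vertex disjoint subhypergraphs each of which is an intersecting (q + 1)-Ryser hypergraph. -/
/-- `B` is a vertex cover of the hypergraph with edge set `E`: it meets every edge. -/
def IsCover {α : Type} [DecidableEq α] (E : Finset (Finset α)) (B : Finset α) : Prop :=
  ∀ e ∈ E, (e ∩ B).Nonempty

/-- `M` is a matching of the hypergraph with edge set `E`: a set of pairwise disjoint edges. -/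
def IsMatching {α : Type} [DecidableEq α] (E : Finset (Finset α)) (M : Finset (Finset α)) : Prop :=
  M ⊆ E ∧ ∀ e ∈ M, ∀ f ∈ M, e ≠ f → Disjoint e f

/-- The vertex cover number `τ`: the minimum size of a vertex cover. -/
noncomputable def coverNumber {α : Type} [DecidableEq α] (E : Finset (Finset α)) : ℕ :=
  sInf {n | ∃ B : Finset α, IsCover E B ∧ B.card = n}

/-- The matching number `ν`: the maximum size of a matching. -/
noncomputable def matchingNumber {α : Type} [DecidableEq α] (E : Finset (Finset α)) : ℕ :=
  sSup {n | ∃ M : Finset (Finset α), IsMatching E M ∧ M.card = n}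

/-- The hypergraph with vertex set `V` and edge set `E` is `r`-partite: `V` is partitioned into
`r` pairwise disjoint sides such that every edge contains exactly one vertex of each side. -/
def IsPartite {α : Type} [DecidableEq α] (r : ℕ) (V : Finset α) (E : Finset (Finset α)) : Prop :=
  (∀ e ∈ E, e ⊆ V) ∧
  ∃ sides : Fin r → Finset α,
    (∀ i j, i ≠ j → Disjoint (sides i) (sides j)) ∧
    V = Finset.univ.biUnion sides ∧
    ∀ e ∈ E, ∀ i, (e ∩ sides i).card = 1

/-- The subhypergraph of `(·, E)` determined by the edge subset `E'` (whose vertex set is the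
union of the edges of `E'`) is an intersecting `r`-Ryser hypergraph: it is `r`-partite, has
matching number `1`, and has vertex cover number at least `(r-1)` times its matching number. -/
def IsIntersectingRyserSub {α : Type} [DecidableEq α] (r : ℕ)
    (E E' : Finset (Finset α)) : Prop :=
  E' ⊆ E ∧ IsPartite r (E'.sup id) E' ∧ matchingNumber E' = 1 ∧
    (r - 1) * matchingNumber E' ≤ coverNumber E'

/-!
Over a field with `q` elements, take as sides the points of `F ∪ {∞}` and as vertices of each side
two copies of `F`, so that an edge is the graph of a function on `F ∪ {∞}`. The first copy carries
the lines `s ↦ u s + v` with `u ≠ 0` (value `u` at `∞`), the second the split monic quadratics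
`s ↦ (s - a) (s - b)` (value `a + b` at `∞`). Two further kinds of edges tie the copies together:
the zero function of the first copy with a nonzero value at `∞` taken from the second copy, and the
zero function of the second copy with value `0` at `∞` taken from the first.

Covering the quadratics takes `q` vertices. Covering the lines takes `q` vertices as well, unless
one uses exactly the `q - 1` nonzero values at `∞`; the tying edges charge that saving to the second
copy, whence `τ = 2q`. An intersecting Ryser subhypergraph without a tying edge of the first kind
cannot contain a line, as all its lines would be covered by `q - 1` slopes. So it lives on the
second copy, where for each `i ≠ 0` it contains a quadratic with value `i` at `∞`: otherwise the
zeros outside `{0, i}` and one common point of `s²` and `(s - i)²` would be a cover of size `q - 1`.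
Hence any two intersecting Ryser subhypergraphs share a vertex.
-/

section Hypergraph

variable {α : Type} [DecidableEq α] {E F : Finset (Finset α)} {n r : ℕ}

theorem IsMatching.card_le_matchingNumber {M : Finset (Finset α)} (hM : IsMatching E M) :
    M.card ≤ matchingNumber E := by
  refine le_csSup ⟨E.card, ?_⟩ ⟨M, hM, rfl⟩
  rintro _ ⟨N, hN, rfl⟩
  exact Finset.card_le_card hN.1

theorem matchingNumber_le (h : ∀ M, IsMatching E M → M.card ≤ n) : matchingNumber E ≤ n := by
  refine csSup_le ⟨0, ∅, by simp [IsMatching], rfl⟩ ?_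
  rintro _ ⟨M, hM, rfl⟩
  exact h M hM

theorem matchingNumber_union_le :
    matchingNumber (E ∪ F) ≤ matchingNumber E + matchingNumber F := by
  refine matchingNumber_le fun M hM => ?_
  have inter_isMatching (D : Finset (Finset α)) : IsMatching D (M ∩ D) :=
    ⟨Finset.inter_subset_right, fun e he f hf =>
      hM.2 e (Finset.mem_inter.1 he).1 f (Finset.mem_inter.1 hf).1⟩
  calc M.card = (M ∩ E ∪ M ∩ F).card := by
        rw [← Finset.inter_union_distrib_left, Finset.inter_eq_left.2 hM.1]
    _ ≤ (M ∩ E).card + (M ∩ F).card := Finset.card_union_le _ _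
    _ ≤ matchingNumber E + matchingNumber F :=
        add_le_add (inter_isMatching E).card_le_matchingNumber
          (inter_isMatching F).card_le_matchingNumber

theorem matchingNumber_le_one (h : ∀ e ∈ E, ∀ f ∈ E, ¬ Disjoint e f) : matchingNumber E ≤ 1 :=
  matchingNumber_le fun _ hM => Finset.card_le_one.2 fun e he f hf =>
    by_contra fun hef => h e (hM.1 he) f (hM.1 hf) (hM.2 e he f hf hef)

theorem two_le_matchingNumber {e f : Finset α} (he : e ∈ E) (hf : f ∈ E) (hne : e.Nonempty)
    (hd : Disjoint e f) : 2 ≤ matchingNumber E := by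
  have hef : e ≠ f := hd.ne hne.ne_empty
  have hM : IsMatching E {e, f} := by
    refine ⟨by simp [Finset.insert_subset_iff, he, hf], ?_⟩
    simp [hd, hd.symm]
  simpa only [Finset.card_pair hef] using hM.card_le_matchingNumber

theorem IsCover.coverNumber_le {B : Finset α} (hB : IsCover E B) : coverNumber E ≤ B.card :=
  Nat.sInf_le ⟨B, hB, rfl⟩

theorem le_coverNumber (hE : ∃ B, IsCover E B) (h : ∀ B, IsCover E B → n ≤ B.card) :
    n ≤ coverNumber E := by
  obtain ⟨B₀, hB₀⟩ := hE
  refine le_csInf ⟨_, B₀, hB₀, rfl⟩ ?_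
  rintro _ ⟨B, hB, rfl⟩
  exact h B hB

theorem IsIntersectingRyserSub.le_card_of_isCover {B : Finset α}
    (hF : IsIntersectingRyserSub (r + 1) E F) (hB : IsCover F B) : r ≤ B.card := by
  obtain ⟨-, -, hν, hτ⟩ := hF
  rw [hν, mul_one, Nat.add_sub_cancel] at hτ
  exact hτ.trans hB.coverNumber_le

theorem IsIntersectingRyserSub.not_disjoint {e f : Finset α}
    (hF : IsIntersectingRyserSub r E F) (he : e ∈ F) (hf : f ∈ F) (hne : e.Nonempty) :
    ¬ Disjoint e f := fun hd => by
  have := two_le_matchingNumber he hf hne hd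
  have := hF.2.2.1
  omega

end Hypergraph

section Graphs

variable {ι κ : Type*}

/-- `T` blocks the family `G` of functions if it meets the graph of each of them: the notion of a
vertex cover for a hypergraph whose edges are graphs of functions. -/
def Blocks (T : Finset (ι × κ)) (G : Set (ι → κ)) : Prop :=
  ∀ g ∈ G, ∃ i, (i, g i) ∈ T

/-- The property of a family of functions which says that their graphs form an intersecting
hypergraph with vertex cover number at least `n`. -/
structure IsRyserFamily (n : ℕ) (G : Set (ι → κ)) : Prop where
  exists_eq : ∀ g ∈ G, ∀ h ∈ G, ∃ i, g i = h i
  le_card : ∀ T, Blocks T G → n ≤ T.card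

theorem exists_left_right_parts {κ' : Type*} (T : Finset (ι × (κ ⊕ κ'))) :
    ∃ (L : Finset (ι × κ)) (R : Finset (ι × κ')),
      (∀ i y, (i, y) ∈ L ↔ (i, Sum.inl y) ∈ T) ∧ (∀ i y, (i, y) ∈ R ↔ (i, Sum.inr y) ∈ T) ∧
        L.card + R.card = T.card := by
  let U := T.map (Equiv.prodSumDistrib ι κ κ').toEmbedding
  exact ⟨U.toLeft, U.toRight, by simp [U], by simp [U],
    U.card_toLeft_add_card_toRight.trans (Finset.card_map _)⟩

variable [Fintype ι] {α : Type} {φ : ι × κ ↪ α} {g h : ι → κ} {G : Set (ι → κ)} {n r : ℕ}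

/-- The graph of `g`, as an edge on the vertex type `α`; the embedding `φ` names the points
of `ι × κ` by elements of `α`. -/
def graphEdge (φ : ι × κ ↪ α) (g : ι → κ) : Finset α :=
  Finset.univ.map ⟨fun i => φ (i, g i), fun _ _ hij => congrArg Prod.fst (φ.injective hij)⟩

theorem mem_graphEdge {x : α} : x ∈ graphEdge φ g ↔ ∃ i, φ (i, g i) = x := by
  simp only [graphEdge, Finset.mem_map, Finset.mem_univ, true_and]
  rfl

theorem graphEdge_nonempty [Nonempty ι] : (graphEdge φ g).Nonempty :=
  Finset.univ_nonempty.map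

theorem not_disjoint_graphEdge_iff :
    ¬ Disjoint (graphEdge φ g) (graphEdge φ h) ↔ ∃ i, g i = h i := by
  rw [Finset.not_disjoint_iff]
  constructor
  · rintro ⟨x, hg, hh⟩
    obtain ⟨i, rfl⟩ := mem_graphEdge.1 hg
    obtain ⟨j, hj⟩ := mem_graphEdge.1 hh
    obtain ⟨rfl, hij⟩ := Prod.mk.inj (φ.injective hj)
    exact ⟨j, hij.symm⟩
  · rintro ⟨i, hi⟩
    exact ⟨φ (i, g i), mem_graphEdge.2 ⟨i, rfl⟩, mem_graphEdge.2 ⟨i, by rw [hi]⟩⟩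

section Finite

variable [Finite κ]

/-- The hypergraph whose edges are the graphs of the functions in `G`, its sides being indexed
by `ι`. -/
noncomputable def graphHypergraph (φ : ι × κ ↪ α) (G : Set (ι → κ)) : Finset (Finset α) :=
  (Set.toFinite (graphEdge φ '' G)).toFinset

theorem mem_graphHypergraph {e : Finset α} :
    e ∈ graphHypergraph φ G ↔ ∃ g ∈ G, graphEdge φ g = e := by
  simp [graphHypergraph]

theorem graphEdge_mem_graphHypergraph (hg : g ∈ G) : graphEdge φ g ∈ graphHypergraph φ G :=
  mem_graphHypergraph.2 ⟨g, hg, rfl⟩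

variable [DecidableEq α]

theorem graphHypergraph_union (G H : Set (ι → κ)) :
    graphHypergraph φ (G ∪ H) = graphHypergraph φ G ∪ graphHypergraph φ H := by
  ext e
  simp only [Finset.mem_union, mem_graphHypergraph, Set.mem_union, or_and_right, exists_or]

theorem isCover_graphHypergraph_iff {B : Finset α} :
    IsCover (graphHypergraph φ G) B ↔ Blocks (B.preimage φ φ.injective.injOn) G := by
  have meets_iff (g : ι → κ) :
      (graphEdge φ g ∩ B).Nonempty ↔ ∃ i, (i, g i) ∈ B.preimage φ φ.injective.injOn := by
    simp only [Finset.Nonempty, Finset.mem_inter, mem_graphEdge, Finset.mem_preimage]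
    exact ⟨fun ⟨_, ⟨i, hi⟩, hB⟩ => ⟨i, hi ▸ hB⟩, fun ⟨i, hi⟩ => ⟨_, ⟨i, rfl⟩, hi⟩⟩
  simp only [IsCover, Blocks, mem_graphHypergraph, forall_exists_index, and_imp,
    forall_apply_eq_imp_iff₂, meets_iff]

theorem isCover_map_graphHypergraph_iff {T : Finset (ι × κ)} :
    IsCover (graphHypergraph φ G) (T.map φ) ↔ Blocks T G := by
  rw [isCover_graphHypergraph_iff, Finset.preimage_map]

theorem le_coverNumber_graphHypergraph [Nonempty ι]
    (h : ∀ T, Blocks T G → n ≤ T.card) : n ≤ coverNumber (graphHypergraph φ G) := by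
  have := Fintype.ofFinite κ
  have hall : Blocks Finset.univ G := fun g _ => ⟨Classical.arbitrary ι, Finset.mem_univ _⟩
  refine le_coverNumber ⟨_, isCover_map_graphHypergraph_iff.2 hall⟩ fun B hB => ?_
  calc n ≤ (B.preimage φ φ.injective.injOn).card := h _ (isCover_graphHypergraph_iff.1 hB)
    _ = ((B.preimage φ φ.injective.injOn).map φ).card := (Finset.card_map _).symm
    _ ≤ B.card := Finset.card_le_card (Finset.map_subset_iff_subset_preimage.2 subset_rfl)

theorem matchingNumber_graphHypergraph_le_one (hG : ∀ g ∈ G, ∀ h ∈ G, ∃ i, g i = h i) :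
    matchingNumber (graphHypergraph φ G) ≤ 1 := by
  refine matchingNumber_le_one fun e he f hf => ?_
  obtain ⟨g, hg, rfl⟩ := mem_graphHypergraph.1 he
  obtain ⟨g', hg', rfl⟩ := mem_graphHypergraph.1 hf
  exact not_disjoint_graphEdge_iff.2 (hG g hg g' hg')

theorem IsIntersectingRyserSub.exists_isRyserFamily [Nonempty ι] {E : Finset (Finset α)}
    (hE : IsIntersectingRyserSub (r + 1) (graphHypergraph φ G) E) :
    ∃ G' ⊆ G, graphHypergraph φ G' = E ∧ IsRyserFamily r G' := by
  have hG' : graphHypergraph φ {g ∈ G | graphEdge φ g ∈ E} = E := by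
    ext e
    rw [mem_graphHypergraph]
    constructor
    · rintro ⟨g, hg, rfl⟩
      exact hg.2
    · intro he
      obtain ⟨g, hg, rfl⟩ := mem_graphHypergraph.1 (hE.1 he)
      exact ⟨g, ⟨hg, he⟩, rfl⟩
  refine ⟨{g ∈ G | graphEdge φ g ∈ E}, Set.sep_subset _ _, hG', ⟨?_, ?_⟩⟩
  · exact fun g hg h hh =>
      not_disjoint_graphEdge_iff.1 (hE.not_disjoint hg.2 hh.2 graphEdge_nonempty)
  · intro T hT
    rw [← isCover_map_graphHypergraph_iff (φ := φ), hG'] at hT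
    simpa only [Finset.card_map] using hE.le_card_of_isCover hT

end Finite

variable [DecidableEq α] [Fintype κ]

theorem isPartite_graphHypergraph (σ : Fin r ≃ ι) :
    IsPartite r (Finset.univ.map φ) (graphHypergraph φ G) := by
  have sides_iff (i : Fin r) (x : α) :
      x ∈ Finset.univ.image (fun y => φ (σ i, y)) ↔ ∃ y, φ (σ i, y) = x := by simp
  refine ⟨?_, fun i => Finset.univ.image fun y => φ (σ i, y), ?_, ?_, ?_⟩
  · intro e he x hx
    obtain ⟨g, -, rfl⟩ := mem_graphHypergraph.1 he
    obtain ⟨i, rfl⟩ := mem_graphEdge.1 hx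
    exact Finset.mem_map_of_mem φ (Finset.mem_univ _)
  · intro i j hij
    refine Finset.disjoint_left.2 fun x hi hj => hij ?_
    obtain ⟨y, rfl⟩ := (sides_iff i x).1 hi
    obtain ⟨z, hz⟩ := (sides_iff j _).1 hj
    exact σ.injective (Prod.mk.inj (φ.injective hz)).1.symm
  · ext x
    simp only [Finset.mem_map, Finset.mem_univ, true_and, Prod.exists, Finset.mem_biUnion,
      sides_iff, σ.surjective.exists]
  · intro e he i
    obtain ⟨g, -, rfl⟩ := mem_graphHypergraph.1 he
    refine Finset.card_eq_one.2 ⟨φ (σ i, g (σ i)), ?_⟩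
    ext x
    rw [Finset.mem_inter, mem_graphEdge, sides_iff, Finset.mem_singleton]
    constructor
    · rintro ⟨⟨j, rfl⟩, y, hy⟩
      rw [(Prod.mk.inj (φ.injective hy)).1]
    · rintro rfl
      exact ⟨⟨_, rfl⟩, _, rfl⟩

theorem coverNumber_graphHypergraph_le (i : ι) :
    coverNumber (graphHypergraph φ G) ≤ Fintype.card κ := by
  have hside : Blocks ({i} ×ˢ Finset.univ) G := fun g _ => ⟨i, by simp⟩
  simpa [Finset.card_map, Finset.card_product] using
    (isCover_map_graphHypergraph_iff (φ := φ).2 hside).coverNumber_le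

end Graphs

section LinesAndParabolas

variable {F : Type*} [Field F]

/-- The line `s ↦ u s + v`, extended by its slope `u` at infinity (`none`). -/
def line (u v : F) : Option F → F
  | none => u
  | some s => u * s + v

/-- The split monic quadratic `s ↦ (s - a) (s - b)`, extended by the sum `a + b` of its roots at
infinity (`none`). -/
def parabola (a b : F) : Option F → F
  | none => a + b
  | some s => (s - a) * (s - b)

theorem exists_line_eq_zero {u : F} (hu : u ≠ 0) (v : F) : ∃ s : F, line u v (some s) = 0 :=
  ⟨-v / u, by simp only [line]; field_simp; ring⟩

theorem exists_line_eq_line (u v u' v' : F) : ∃ i, line u v i = line u' v' i := by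
  by_cases huu' : u = u'
  · exact ⟨none, huu'⟩
  · obtain ⟨s, hs⟩ := exists_line_eq_zero (sub_ne_zero.2 huu') (v - v')
    refine ⟨some s, ?_⟩
    simp only [line] at hs ⊢
    linear_combination hs

-- The difference of two monic quadratics is a difference of lines.
theorem exists_parabola_eq_parabola (a b c d : F) : ∃ i, parabola a b i = parabola c d i := by
  obtain ⟨i, hi⟩ := exists_line_eq_line (-(a + b)) (a * b) (-(c + d)) (c * d)
  refine ⟨i, ?_⟩
  cases i with
  | none => exact neg_injective hi
  | some s =>
    simp only [line, parabola] at hi ⊢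
    linear_combination hi

theorem exists_parabola_neg_ne_zero (s : F) : ∃ a : F, parabola a (-a) (some s) ≠ 0 := by
  by_cases hs : s = 0
  · exact ⟨1, by simp [parabola, hs]⟩
  · exact ⟨0, by simp [parabola, hs]⟩

variable [Fintype F] {S : Finset (Option F × F)}

-- The `q` parabolas through an uncovered zero `a` are disjoint elsewhere; the map below recovers
-- the second root of such a parabola from any of its other points.
theorem card_le_of_meets_parabolas (hS : ∀ a b, ∃ i, (i, parabola a b i) ∈ S) :
    Fintype.card F ≤ S.card := by
  by_cases hzeros : ∀ a, (some a, 0) ∈ S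
  · exact Finset.card_le_card_of_injOn (fun a => (some a, 0)) (fun a _ => hzeros a)
      (fun a _ b _ hab => by simpa using hab)
  obtain ⟨a, ha⟩ := not_forall.1 hzeros
  let secondRoot : Option F × F → F
    | (none, c) => c - a
    | (some s, y) => s - y / (s - a)
  refine Finset.card_le_card_of_surjOn secondRoot fun b _ => ?_
  obtain ⟨i, hi⟩ := hS a b
  refine ⟨_, hi, ?_⟩
  cases i with
  | none => exact add_sub_cancel_left a b
  | some s =>
    have hsa : s - a ≠ 0 := fun h => ha (by simpa [parabola, h, sub_eq_zero.1 h] using hi)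
    simp only [secondRoot, parabola]
    field_simp
    ring

theorem card_le_of_meets_parallel_lines {u : F} (hS : ∀ v, ∃ s, (some s, line u v (some s)) ∈ S) :
    Fintype.card F ≤ S.card := by
  refine Finset.card_le_card_of_surjOn (fun p => p.2 - u * p.1.getD 0) fun v _ => ?_
  obtain ⟨s, hs⟩ := hS v
  exact ⟨_, hs, by simp [line]⟩

-- Among the parabolas with both roots in `{0, c}`, only those with a double root have to be met
-- outside the zeros, and a single point lies on both.
theorem exists_meets_parabolas_of_add_ne (hF : 2 < Fintype.card F) {c : F} (hc : c ≠ 0) :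
    ∃ S : Finset (Option F × F), S.card < Fintype.card F ∧ (∃ s, (some s, 0) ∈ S) ∧
      ∀ a b, a + b ≠ c → ∃ i, (i, parabola a b i) ∈ S := by
  classical
  obtain ⟨j, hj⟩ := exists_parabola_eq_parabola 0 0 c c
  let zeros : Finset (Option F × F) := ({0, c}ᶜ : Finset F).image fun s => (some s, 0)
  have mem_zeros {s : F} (hs : s ≠ 0 ∧ s ≠ c) : (some s, 0) ∈ zeros :=
    Finset.mem_image_of_mem _ (by simpa using hs)
  have hpair : ({0, c} : Finset F).card = 2 := Finset.card_pair hc.symm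
  have hcard : zeros.card ≤ Fintype.card F - 2 :=
    Finset.card_image_le.trans_eq (by rw [Finset.card_compl, hpair])
  refine ⟨insert (j, parabola 0 0 j) zeros, ?_, ?_, fun a b hab => ?_⟩
  · have := Finset.card_insert_le (j, parabola 0 0 j) zeros
    omega
  · obtain ⟨s, hs⟩ := Finset.exists_mem_notMem_of_card_lt_card
      (hpair.trans_lt (hF.trans_eq Finset.card_univ.symm))
    exact ⟨s, Finset.mem_insert_of_mem (mem_zeros (by simpa using hs.2))⟩
  · by_cases ha : a ≠ 0 ∧ a ≠ c
    · exact ⟨some a, Finset.mem_insert_of_mem (by simpa [parabola] using mem_zeros ha)⟩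
    by_cases hb : b ≠ 0 ∧ b ≠ c
    · exact ⟨some b, Finset.mem_insert_of_mem (by simpa [parabola] using mem_zeros hb)⟩
    have hdouble : (a = 0 ∧ b = 0) ∨ (a = c ∧ b = c) := by grind
    refine ⟨j, Finset.mem_insert.2 (Or.inl ?_)⟩
    rcases hdouble with ⟨rfl, rfl⟩ | ⟨rfl, rfl⟩
    · rfl
    · rw [hj]

variable [DecidableEq F]

/-- The vertices at infinity with nonzero value: the unique set of fewer than `q` points meeting all
lines of nonzero slope. -/
def nonzeroAtInfinity (F : Type*) [Field F] [Fintype F] [DecidableEq F] :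
    Finset (Option F × F) :=
  {none} ×ˢ Finset.univ.erase 0

theorem mem_nonzeroAtInfinity {p : Option F × F} :
    p ∈ nonzeroAtInfinity F ↔ p.1 = none ∧ p.2 ≠ 0 := by
  simp only [nonzeroAtInfinity, Finset.mem_product, Finset.mem_singleton, Finset.mem_erase,
    Finset.mem_univ, and_true, ne_eq]

theorem card_nonzeroAtInfinity_add_one : (nonzeroAtInfinity F).card + 1 = Fintype.card F := by
  rw [nonzeroAtInfinity, Finset.card_product, Finset.card_singleton, one_mul,
    Finset.card_erase_add_one (Finset.mem_univ _), Finset.card_univ]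

theorem card_le_or_eq_nonzeroAtInfinity
    (hS : ∀ u v, u ≠ 0 → ∃ i, (i, line u v i) ∈ S) :
    Fintype.card F ≤ S.card ∨ S = nonzeroAtInfinity F := by
  by_cases hslopes : nonzeroAtInfinity F ⊆ S
  · rcases hslopes.eq_or_ssubset with heq | hlt
    · exact Or.inr heq.symm
    · exact Or.inl (card_nonzeroAtInfinity_add_one.symm.trans_le (Finset.card_lt_card hlt))
  · obtain ⟨⟨i, u⟩, hu, huS⟩ := Finset.not_subset.1 hslopes
    obtain ⟨rfl, hu⟩ := mem_nonzeroAtInfinity.1 hu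
    refine Or.inl (card_le_of_meets_parallel_lines (u := u) fun v => ?_)
    obtain ⟨_ | s, hs⟩ := hS u v hu
    · exact absurd hs huS
    · exact ⟨s, hs⟩

theorem card_lt_of_meets_parabolas (hS : ∀ a b, ∃ i, (i, parabola a b i) ∈ S)
    (hinf : nonzeroAtInfinity F ⊆ S) {s : F} (hs : (some s, 0) ∈ S) :
    Fintype.card F < S.card := by
  obtain ⟨a, ha⟩ := exists_parabola_neg_ne_zero s
  obtain ⟨i, hi⟩ := hS a (-a)
  have hnew : (i, parabola a (-a) i) ∉ insert (some s, 0) (nonzeroAtInfinity F) := by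
    rw [Finset.mem_insert, mem_nonzeroAtInfinity, Prod.mk.injEq]
    rintro (⟨rfl, h⟩ | ⟨rfl, h⟩)
    · exact ha h
    · exact h (add_neg_cancel a)
  have hsub : insert (i, parabola a (-a) i) (insert (some s, 0) (nonzeroAtInfinity F)) ⊆ S :=
    Finset.insert_subset hi (Finset.insert_subset hs hinf)
  have hcard := Finset.card_le_card hsub
  rw [Finset.card_insert_of_notMem hnew,
    Finset.card_insert_of_notMem (by simp [mem_nonzeroAtInfinity]),
    card_nonzeroAtInfinity_add_one] at hcard
  exact hcard

end LinesAndParabolas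

section Construction

variable {F : Type*} [Field F]

/-- The zero function of the first copy of `F`, with the value `c` of the second copy at
infinity. -/
def twistedLine (c : F) : Option F → F ⊕ F
  | none => Sum.inr c
  | some _ => Sum.inl 0

/-- The zero function of the second copy of `F`, with the value `0` of the first copy at
infinity. -/
def twistedParabola (F : Type*) [Field F] : Option F → F ⊕ F
  | none => Sum.inl 0
  | some _ => Sum.inr 0

/-- The edges that lie in the first copy of `F`, except possibly at infinity. -/
def lineFamily (F : Type*) [Field F] : Set (Option F → F ⊕ F) :=
  {g | (∃ u v, u ≠ 0 ∧ g = Sum.inl ∘ line u v) ∨ ∃ c, c ≠ 0 ∧ g = twistedLine c}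

/-- The edges that lie in the second copy of `F`, except possibly at infinity. -/
def parabolaFamily (F : Type*) [Field F] : Set (Option F → F ⊕ F) :=
  {g | (∃ a b, g = Sum.inr ∘ parabola a b) ∨ g = twistedParabola F}

theorem lineFamily_exists_eq {g h : Option F → F ⊕ F} (hg : g ∈ lineFamily F)
    (hh : h ∈ lineFamily F) : ∃ i, g i = h i := by
  rcases hg with ⟨u, v, hu, rfl⟩ | ⟨c, -, rfl⟩ <;>
  rcases hh with ⟨u', v', hu', rfl⟩ | ⟨d, -, rfl⟩
  · exact (exists_line_eq_line u v u' v').imp fun _ => congrArg Sum.inl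
  · obtain ⟨s, hs⟩ := exists_line_eq_zero hu v
    exact ⟨some s, congrArg Sum.inl hs⟩
  · obtain ⟨s, hs⟩ := exists_line_eq_zero hu' v'
    exact ⟨some s, congrArg Sum.inl hs.symm⟩
  · exact ⟨some 0, rfl⟩

theorem parabolaFamily_exists_eq {g h : Option F → F ⊕ F} (hg : g ∈ parabolaFamily F)
    (hh : h ∈ parabolaFamily F) : ∃ i, g i = h i := by
  rcases hg with ⟨a, b, rfl⟩ | rfl <;> rcases hh with ⟨c, d, rfl⟩ | rfl
  · exact (exists_parabola_eq_parabola a b c d).imp fun _ => congrArg Sum.inr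
  · exact ⟨some a, by simp [parabola, twistedParabola]⟩
  · exact ⟨some c, by simp [parabola, twistedParabola]⟩
  · exact ⟨none, rfl⟩

theorem exists_eq_line_of_meets_line {g : Option F → F ⊕ F}
    (hg : g ∈ lineFamily F ∪ parabolaFamily F)
    (hg' : ∀ c, c ≠ 0 → g ≠ twistedLine c) {u v : F} (hu : u ≠ 0)
    (hi : ∃ i, (Sum.inl ∘ line u v) i = g i) : ∃ u' v', u' ≠ 0 ∧ g = Sum.inl ∘ line u' v' := by
  obtain ⟨i, hi⟩ := hi
  rcases hg with (hline | ⟨c, hc, rfl⟩) | (⟨a, b, rfl⟩ | rfl)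
  · exact hline
  · exact absurd rfl (hg' c hc)
  · simp at hi
  · cases i with
    | none => exact absurd (Sum.inl_injective hi) hu
    | some s => simp [twistedParabola] at hi

variable [Fintype F]

theorem card_le_of_blocks {T : Finset (Option F × (F ⊕ F))}
    (hT : Blocks T (lineFamily F ∪ parabolaFamily F)) : 2 * Fintype.card F ≤ T.card := by
  classical
  obtain ⟨L, R, mem_left, mem_right, hcard⟩ := exists_left_right_parts T
  have hlines : ∀ u v, u ≠ 0 → ∃ i, (i, line u v i) ∈ L := fun u v hu =>
    (hT _ (.inl (.inl ⟨u, v, hu, rfl⟩))).imp fun i => (mem_left i _).2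
  have hparabolas : ∀ a b, ∃ i, (i, parabola a b i) ∈ R := fun a b =>
    (hT _ (.inr (.inl ⟨a, b, rfl⟩))).imp fun i => (mem_right i _).2
  have hright := card_le_of_meets_parabolas hparabolas
  rcases card_le_or_eq_nonzeroAtInfinity hlines with hleft | hleft
  · omega
  have hinf : nonzeroAtInfinity F ⊆ R := by
    rintro ⟨i, c⟩ hc
    obtain ⟨rfl, hc⟩ := mem_nonzeroAtInfinity.1 hc
    obtain ⟨_ | s, hi⟩ := hT _ (.inl (.inr ⟨c, hc, rfl⟩))
    · exact (mem_right _ _).2 hi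
    · have := (mem_left _ _).2 hi
      simp [hleft, mem_nonzeroAtInfinity] at this
  obtain ⟨s, hs⟩ : ∃ s, (some s, 0) ∈ R := by
    obtain ⟨_ | s, hi⟩ := hT _ (.inr (.inr rfl))
    · have := (mem_left _ _).2 hi
      simp [hleft, mem_nonzeroAtInfinity] at this
    · exact ⟨s, (mem_right _ _).2 hi⟩
  have hright' := card_lt_of_meets_parabolas hparabolas hinf hs
  have hleft' := card_nonzeroAtInfinity_add_one (F := F)
  rw [← hleft] at hleft'
  omega

variable {G : Set (Option F → F ⊕ F)}

theorem IsRyserFamily.subset_parabolaFamily (hG : IsRyserFamily (Fintype.card F) G)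
    (hsub : G ⊆ lineFamily F ∪ parabolaFamily F) (htw : ∀ c, c ≠ 0 → twistedLine c ∉ G) :
    G ⊆ parabolaFamily F := by
  classical
  intro g hg
  refine (hsub hg).resolve_left ?_
  rintro (⟨u, v, hu, rfl⟩ | ⟨c, hc, rfl⟩)
  swap
  · exact htw c hc hg
  have hblocks : Blocks ((nonzeroAtInfinity F).map
      ((Function.Embedding.refl _).prodMap Function.Embedding.inl)) G := by
    intro h hh
    obtain ⟨u', v', hu', rfl⟩ := exists_eq_line_of_meets_line (hsub hh)
      (fun c hc heq => htw c hc (heq ▸ hh)) hu (hG.exists_eq _ hg _ hh)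
    exact ⟨none, Finset.mem_map.2 ⟨(none, u'), mem_nonzeroAtInfinity.2 ⟨rfl, hu'⟩, rfl⟩⟩
  have hcard := hG.le_card _ hblocks
  rw [Finset.card_map] at hcard
  have := card_nonzeroAtInfinity_add_one (F := F)
  omega

theorem IsRyserFamily.exists_parabola_mem (hG : IsRyserFamily (Fintype.card F) G)
    (hsub : G ⊆ parabolaFamily F) (hF : 2 < Fintype.card F) {c : F} (hc : c ≠ 0) :
    ∃ a b, a + b = c ∧ Sum.inr ∘ parabola a b ∈ G := by
  by_contra! hno
  obtain ⟨S, hcard, ⟨s, hs⟩, hS⟩ := exists_meets_parabolas_of_add_ne hF hc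
  have hblocks : Blocks
      (S.map ((Function.Embedding.refl (Option F)).prodMap Function.Embedding.inr)) G := by
    intro g hg
    rcases hsub hg with ⟨a, b, rfl⟩ | rfl
    · obtain ⟨i, hi⟩ := hS a b fun h => hno a b h hg
      exact ⟨i, Finset.mem_map.2 ⟨_, hi, rfl⟩⟩
    · exact ⟨some s, Finset.mem_map.2 ⟨_, hs, rfl⟩⟩
  have := hG.le_card _ hblocks
  rw [Finset.card_map] at this
  omega

theorem IsRyserFamily.exists_twistedLine_mem_or (hG : IsRyserFamily (Fintype.card F) G)
    (hsub : G ⊆ lineFamily F ∪ parabolaFamily F) (hF : 2 < Fintype.card F) :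
    (∃ c, c ≠ 0 ∧ twistedLine c ∈ G) ∨
      ∀ c, c ≠ 0 → ∃ a b, a + b = c ∧ Sum.inr ∘ parabola a b ∈ G := by
  by_cases htw : ∃ c, c ≠ 0 ∧ twistedLine c ∈ G
  · exact Or.inl htw
  · push Not at htw
    exact Or.inr fun c hc => hG.exists_parabola_mem (hG.subset_parabolaFamily hsub htw) hF hc

theorem IsRyserFamily.exists_common_value {G₁ G₂ : Set (Option F → F ⊕ F)}
    (hG₁ : IsRyserFamily (Fintype.card F) G₁) (hG₂ : IsRyserFamily (Fintype.card F) G₂)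
    (hsub₁ : G₁ ⊆ lineFamily F ∪ parabolaFamily F) (hsub₂ : G₂ ⊆ lineFamily F ∪ parabolaFamily F)
    (hF : 2 < Fintype.card F) : ∃ g ∈ G₁, ∃ h ∈ G₂, ∃ i, g i = h i := by
  rcases hG₁.exists_twistedLine_mem_or hsub₁ hF with ⟨c, hc, hcG⟩ | hpar₁ <;>
  rcases hG₂.exists_twistedLine_mem_or hsub₂ hF with ⟨d, hd, hdG⟩ | hpar₂
  · exact ⟨_, hcG, _, hdG, some 0, rfl⟩
  · obtain ⟨a, b, hab, habG⟩ := hpar₂ c hc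
    exact ⟨_, hcG, _, habG, none, congrArg Sum.inr hab.symm⟩
  · obtain ⟨a, b, hab, habG⟩ := hpar₁ d hd
    exact ⟨_, habG, _, hdG, none, congrArg Sum.inr hab⟩
  · obtain ⟨a, b, hab, habG⟩ := hpar₁ 1 one_ne_zero
    obtain ⟨a', b', hab', habG'⟩ := hpar₂ 1 one_ne_zero
    exact ⟨_, habG, _, habG', none, congrArg Sum.inr (hab.trans hab'.symm)⟩

variable {α : Type} [DecidableEq α] (φ : Option F × (F ⊕ F) ↪ α)

theorem matchingNumber_lineFamily_union_parabolaFamily :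
    matchingNumber (graphHypergraph φ (lineFamily F ∪ parabolaFamily F)) = 2 := by
  refine le_antisymm ?_ ?_
  · rw [graphHypergraph_union]
    exact matchingNumber_union_le.trans <| add_le_add
      (matchingNumber_graphHypergraph_le_one fun _ hg _ hh => lineFamily_exists_eq hg hh)
      (matchingNumber_graphHypergraph_le_one fun _ hg _ hh => parabolaFamily_exists_eq hg hh)
  · have hline : twistedLine 1 ∈ lineFamily F := .inr ⟨1, one_ne_zero, rfl⟩
    have hparabola : twistedParabola F ∈ parabolaFamily F := .inr rfl
    refine two_le_matchingNumber (graphEdge_mem_graphHypergraph (.inl hline))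
      (graphEdge_mem_graphHypergraph (.inr hparabola)) graphEdge_nonempty ?_
    by_contra hmeet
    obtain ⟨_ | s, hi⟩ := not_disjoint_graphEdge_iff.1 hmeet <;>
      simp [twistedLine, twistedParabola] at hi

theorem coverNumber_lineFamily_union_parabolaFamily :
    coverNumber (graphHypergraph φ (lineFamily F ∪ parabolaFamily F)) = 2 * Fintype.card F := by
  refine le_antisymm ?_ (le_coverNumber_graphHypergraph fun _ => card_le_of_blocks)
  have hside := coverNumber_graphHypergraph_le (φ := φ) (G := lineFamily F ∪ parabolaFamily F) none
  rwa [Fintype.card_sum, ← two_mul] at hside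

theorem not_disjoint_sup_of_isIntersectingRyserSub (hF : 2 < Fintype.card F)
    {E₁ E₂ : Finset (Finset α)}
    (hE₁ : IsIntersectingRyserSub (Fintype.card F + 1)
      (graphHypergraph φ (lineFamily F ∪ parabolaFamily F)) E₁)
    (hE₂ : IsIntersectingRyserSub (Fintype.card F + 1)
      (graphHypergraph φ (lineFamily F ∪ parabolaFamily F)) E₂) :
    ¬ Disjoint (E₁.sup id) (E₂.sup id) := by
  obtain ⟨G₁, hsub₁, rfl, hG₁⟩ := hE₁.exists_isRyserFamily
  obtain ⟨G₂, hsub₂, rfl, hG₂⟩ := hE₂.exists_isRyserFamily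
  obtain ⟨g, hg, h, hh, heq⟩ := hG₁.exists_common_value hG₂ hsub₁ hsub₂ hF
  exact fun hd => not_disjoint_graphEdge_iff.2 heq <|
    hd.mono (Finset.le_sup (f := id) (graphEdge_mem_graphHypergraph hg))
      (Finset.le_sup (f := id) (graphEdge_mem_graphHypergraph hh))

end Construction

theorem exists_field_card_eq {q : ℕ} (hq : IsPrimePow q) :
    ∃ (F : Type) (_ : Field F) (_ : Fintype F), Fintype.card F = q := by
  rw [← Fintype.card_fin q] at hq
  obtain ⟨hfield⟩ := Fintype.nonempty_field_iff.2 hq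
  exact ⟨Fin q, hfield, inferInstance, Fintype.card_fin q⟩

theorem statement3_general (q : ℕ) (hq : IsPrimePow q) (htwo : 2 < q) :
    ∃ (V : Finset ℕ) (E : Finset (Finset ℕ)),
      IsPartite (q + 1) V E ∧
      matchingNumber E = 2 ∧
      coverNumber E = 2 * q ∧
      ¬ ∃ E₁ E₂ : Finset (Finset ℕ),
          IsIntersectingRyserSub (q + 1) E E₁ ∧ IsIntersectingRyserSub (q + 1) E E₂ ∧
          Disjoint (E₁.sup id) (E₂.sup id) := by
  obtain ⟨F, _, _, rfl⟩ := exists_field_card_eq hq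
  obtain ⟨f, hf⟩ := exists_injective_nat (Option F × (F ⊕ F))
  let φ : Option F × (F ⊕ F) ↪ ℕ := ⟨f, hf⟩
  let sideEquiv : Fin (Fintype.card F + 1) ≃ Option F :=
    (Fintype.equivFinOfCardEq Fintype.card_option).symm
  refine ⟨Finset.univ.map φ, graphHypergraph φ (lineFamily F ∪ parabolaFamily F),
    isPartite_graphHypergraph sideEquiv, matchingNumber_lineFamily_union_parabolaFamily φ,
    coverNumber_lineFamily_union_parabolaFamily φ, ?_⟩
  rintro ⟨E₁, E₂, hE₁, hE₂, hdisj⟩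
  exact not_disjoint_sup_of_isIntersectingRyserSub φ htwo hE₁ hE₂ hdisj

/-- For every odd prime `q` there exists a `(q + 1)`-partite hypergraph `H` with matching
number `2` and vertex cover number `2q` that does not contain two vertex disjoint
subhypergraphs each of which is an intersecting `(q + 1)`-Ryser hypergraph. -/
theorem statement3 (q : ℕ) (hq : q.Prime) (hodd : Odd q) :
    ∃ (V : Finset ℕ) (E : Finset (Finset ℕ)),
      IsPartite (q + 1) V E ∧
      matchingNumber E = 2 ∧
      coverNumber E = 2 * q ∧
      ¬ ∃ E₁ E₂ : Finset (Finset ℕ),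
          IsIntersectingRyserSub (q + 1) E E₁ ∧ IsIntersectingRyserSub (q + 1) E E₂ ∧
          Disjoint (E₁.sup id) (E₂.sup id) := by
  exact statement3_general q hq.isPrimePow <|
    hq.two_le.lt_of_ne (hodd.ne_two_of_dvd_nat dvd_rfl).symm
end

section
/- For every prime power q with q ≥ 4 there exists a (q + 1)-partite hypergraph H with matching number ν(H) = 2 and vertex cover number τ(H) = 2q such that H does not contain two vertex disjoint subhypergraphs each of which is an intersecting (q + 1)-Ryser hypergraph. -/
namespace RyserHypergraph

/-!
Let `F` be the field with `q` elements. Each side of the hypergraph is the disjoint union of two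
parts. The first part carries the affine plane over `F` without the points of one column: the sides
are the parallel classes of lines, and the edge of a point consists of the lines through it. This
intersecting family has cover number only `q - 1`, the vertical lines being its only cover of that
size. The second part carries an intersecting family `I` of cover number `q` which is critical on
the vertical side: without the edges through any one vertex `v` of that side it has a cover with
fewer than `q` vertices. For every such `v`, a bridge joins `v` to the non-vertical lines through a
fixed removed point of the plane.

Bridges force the total cover number up to `2 * q`. On the other hand, of two vertex disjoint
intersecting subhypergraphs, one lives in the bridged plane and the other in `I`. If the first has
no bridge, it has cover number less than `q`; if it has the bridge at `v`, then the second avoids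
`v` and has cover number less than `q` by criticality.

Criticality holds as soon as each side has at most `q + 1` vertices and three edges of `I` are
alone on their vertices of the vertical side. For `q ≥ 5` such an `I` is obtained from the plane by
deleting two columns and two lines and adding three such edges and four more. Its cover number is
bounded by looking at a hypothetical cover as a set of at most `q - 1` lines: together with the two
deleted lines, these cover every remaining column with almost no repetition, and since the elements
of `F` sum to zero all repetitions lie on one line. For `q = 4` an explicit family of ten edges is
used.
-/

open Finset

section Hypergraph

variable {α : Type} [DecidableEq α] {E E₁ E₂ : Finset (Finset α)}

lemma card_le_card_of_isMatching {M : Finset (Finset α)} (hM : IsMatching E M) : #M ≤ #E :=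
  card_le_card hM.1

lemma nonempty_of_matchingNumber_pos (h : 0 < matchingNumber E) : E.Nonempty := by
  by_contra hE
  obtain rfl := not_nonempty_iff_eq_empty.1 hE
  refine h.not_ge (csSup_le' ?_)
  rintro n ⟨M, hM, rfl⟩
  exact card_le_card_of_isMatching hM

lemma two_le_matchingNumber {e f : Finset α} (he : e ∈ E) (hf : f ∈ E) (hef : e ≠ f)
    (hdisj : Disjoint e f) : 2 ≤ matchingNumber E := by
  refine le_csSup ⟨#E, ?_⟩ ⟨{e, f}, ⟨?_, ?_⟩, card_pair hef⟩
  · rintro n ⟨M, hM, rfl⟩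
    exact card_le_card_of_isMatching hM
  · simp [insert_subset_iff, he, hf]
  · simp [hdisj, hdisj.symm]

lemma matchingNumber_union_le_two (h₁ : (E₁ : Set (Finset α)).Intersecting)
    (h₂ : (E₂ : Set (Finset α)).Intersecting) : matchingNumber (E₁ ∪ E₂) ≤ 2 := by
  refine csSup_le' ?_
  rintro n ⟨M, ⟨hME, hM⟩, rfl⟩
  have card_inter_le_one (E' : Finset (Finset α)) (hE' : (E' : Set (Finset α)).Intersecting) :
      #(M ∩ E') ≤ 1 := card_le_one.2 fun e he f hf ↦ by
    rw [mem_inter] at he hf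
    by_contra hef
    exact hE' he.2 hf.2 (hM e he.1 f hf.1 hef)
  calc #M = #(M ∩ E₁ ∪ M ∩ E₂) := by rw [← inter_union_distrib_left, inter_eq_left.2 hME]
    _ ≤ #(M ∩ E₁) + #(M ∩ E₂) := card_union_le _ _
    _ ≤ 1 + 1 := add_le_add (card_inter_le_one E₁ h₁) (card_inter_le_one E₂ h₂)

lemma subset_or_subset_of_disjoint_sup (h₁ : (E₁ : Set (Finset α)).Intersecting)
    (h₂ : (E₂ : Set (Finset α)).Intersecting) {A B : Finset (Finset α)} (hA : A ⊆ E₁ ∪ E₂)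
    (hB : B ⊆ E₁ ∪ E₂) (hA₀ : A.Nonempty) (hB₀ : B.Nonempty)
    (hAB : Disjoint (A.sup id) (B.sup id)) : A ⊆ E₁ ∧ B ⊆ E₂ ∨ A ⊆ E₂ ∧ B ⊆ E₁ := by
  have hdisj {e f : Finset α} (he : e ∈ A) (hf : f ∈ B) : Disjoint e f :=
    hAB.mono (le_sup (f := id) he) (le_sup (f := id) hf)
  obtain ⟨e, he⟩ := hA₀
  obtain ⟨f, hf⟩ := hB₀
  have not_both {E' : Finset (Finset α)} (hE' : (E' : Set (Finset α)).Intersecting) {e f}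
      (he : e ∈ A) (hf : f ∈ B) : ¬ (e ∈ E' ∧ f ∈ E') := fun h ↦ hE' h.1 h.2 (hdisj he hf)
  have hA' {g} (hg : g ∈ A) : g ∈ E₁ ∨ g ∈ E₂ := mem_union.1 (hA hg)
  have hB' {g} (hg : g ∈ B) : g ∈ E₁ ∨ g ∈ E₂ := mem_union.1 (hB hg)
  rcases hA' he with he₁ | he₂
  · have hBE : B ⊆ E₂ := fun g hg ↦ (hB' hg).resolve_left fun h ↦ not_both h₁ he hg ⟨he₁, h⟩
    exact .inl ⟨fun g hg ↦ (hA' hg).resolve_right fun h ↦ not_both h₂ hg hf ⟨h, hBE hf⟩, hBE⟩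
  · have hBE : B ⊆ E₁ := fun g hg ↦ (hB' hg).resolve_right fun h ↦ not_both h₂ he hg ⟨he₂, h⟩
    exact .inr ⟨fun g hg ↦ (hA' hg).resolve_left fun h ↦ not_both h₁ hg hf ⟨h, hBE hf⟩, hBE⟩

/-- A hypergraph as in the theorem: it is extremal for Ryser's conjecture with matching number two,
but this is not witnessed by two disjoint intersecting Ryser subhypergraphs. -/
def IsIndecomposableExtremal (q : ℕ) (V : Finset α) (E : Finset (Finset α)) : Prop :=
  IsPartite (q + 1) V E ∧ matchingNumber E = 2 ∧ coverNumber E = 2 * q ∧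
    ¬ ∃ E₁ E₂ : Finset (Finset α), IsIntersectingRyserSub (q + 1) E E₁ ∧
      IsIntersectingRyserSub (q + 1) E E₂ ∧ Disjoint (E₁.sup id) (E₂.sup id)

lemma not_exists_disjoint_ryserSub {q : ℕ} (h₁ : (E₁ : Set (Finset α)).Intersecting)
    (h₂ : (E₂ : Set (Finset α)).Intersecting)
    (hcover : ∀ A ⊆ E₁, ∀ B ⊆ E₂, Disjoint (A.sup id) (B.sup id) →
      coverNumber A < q ∨ coverNumber B < q) :
    ¬ ∃ A B : Finset (Finset α), IsIntersectingRyserSub (q + 1) (E₁ ∪ E₂) A ∧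
      IsIntersectingRyserSub (q + 1) (E₁ ∪ E₂) B ∧ Disjoint (A.sup id) (B.sup id) := by
  rintro ⟨A, B, ⟨hA, -, hνA, hτA⟩, ⟨hB, -, hνB, hτB⟩, hAB⟩
  rw [hνA, Nat.add_sub_cancel, mul_one] at hτA
  rw [hνB, Nat.add_sub_cancel, mul_one] at hτB
  rcases subset_or_subset_of_disjoint_sup h₁ h₂ hA hB
    (nonempty_of_matchingNumber_pos (by omega)) (nonempty_of_matchingNumber_pos (by omega)) hAB
    with ⟨hA', hB'⟩ | ⟨hA', hB'⟩
  · have := hcover A hA' B hB' hAB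
    omega
  · have := hcover B hB' A hA' hAB.symm
    omega

end Hypergraph

section Transversal

variable {ι W : Type*}

/-- Edges of a partite hypergraph whose sides are copies of `W` indexed by `ι` are functions
`e : ι → W`, with vertices `(i, e i)`. Two edges meet if they share a vertex. -/
def Meets (e f : ι → W) : Prop := ∃ i, e i = f i

/-- The vertex set `B` contains a vertex of the edge `e`. -/
def Hits (B : Finset (ι × W)) (e : ι → W) : Prop := ∃ i, (i, e i) ∈ B

/-- `B` is a vertex cover of the family `S` of edges. -/
def Covers (B : Finset (ι × W)) (S : Set (ι → W)) : Prop := ∀ e ∈ S, Hits B e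

/-- Any two members of the family `S` of edges meet. -/
def IsIntersecting (S : Set (ι → W)) : Prop := ∀ e ∈ S, ∀ f ∈ S, Meets e f

lemma Meets.symm {e f : ι → W} (h : Meets e f) : Meets f e := h.imp fun _ ↦ Eq.symm

lemma Meets.comp {W' : Type*} {e f : ι → W} (h : Meets e f) (g : W → W') :
    Meets (g ∘ e) (g ∘ f) := h.imp fun _ ↦ congrArg g

lemma Hits.mono {B B' : Finset (ι × W)} {e : ι → W} (hB : B ⊆ B') (h : Hits B e) : Hits B' e :=
  h.imp fun _ hi ↦ hB hi

lemma isIntersecting_union {S T : Set (ι → W)} (hS : IsIntersecting S) (hT : IsIntersecting T)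
    (hST : ∀ e ∈ S, ∀ f ∈ T, Meets e f) : IsIntersecting (S ∪ T) := by
  rintro e (he | he) f (hf | hf)
  · exact hS e he f hf
  · exact hST e he f hf
  · exact (hST f hf e he).symm
  · exact hT e he f hf

lemma isIntersecting_insert [Nonempty ι] {S : Set (ι → W)} {e : ι → W} (hS : IsIntersecting S)
    (he : ∀ f ∈ S, Meets e f) : IsIntersecting (insert e S) := by
  refine isIntersecting_union (S := {e}) ?_ hS (by simpa using he)
  rintro _ rfl _ rfl
  exact ⟨Classical.arbitrary ι, rfl⟩

end Transversal

section Encoding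

variable {ι W : Type*} [Fintype ι] {S : Set (ι → W)} (c : ι × W ↪ ℕ)

/-- The vertex set of the edge `e`, vertices being numbered by `c`. -/
def edgeSet (e : ι → W) : Finset ℕ := univ.image fun i ↦ c (i, e i)

variable {c}

lemma mem_edgeSet {e : ι → W} {n : ℕ} : n ∈ edgeSet c e ↔ ∃ i, c (i, e i) = n := by
  simp [edgeSet]

lemma disjoint_edgeSet {e f : ι → W} :
    Disjoint (edgeSet c e) (edgeSet c f) ↔ ¬ Meets e f := by
  simp only [Finset.disjoint_left, mem_edgeSet, Meets]
  constructor
  · rintro h ⟨i, hi⟩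
    exact h ⟨i, rfl⟩ ⟨i, by rw [hi]⟩
  · rintro h _ ⟨i, rfl⟩ ⟨j, hj⟩
    obtain ⟨rfl, hfe⟩ := Prod.mk.inj (c.injective hj)
    exact h ⟨_, hfe.symm⟩

lemma edgeSet_ne [Nonempty ι] {e f : ι → W} (h : ¬ Meets e f) : edgeSet c e ≠ edgeSet c f := by
  intro hef
  have hdisj := disjoint_edgeSet (c := c).2 h
  rw [← hef, disjoint_self] at hdisj
  exact (univ_nonempty.image fun i ↦ c (i, e i)).ne_empty hdisj

variable [Finite W] (c)

/-- The family `S` of edges as a hypergraph on `ℕ`. -/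
noncomputable def hypergraph (S : Set (ι → W)) : Finset (Finset ℕ) :=
  (Set.toFinite S).toFinset.image (edgeSet c)

variable {c}

lemma mem_hypergraph {s : Finset ℕ} : s ∈ hypergraph c S ↔ ∃ e ∈ S, edgeSet c e = s := by
  simp [hypergraph]

lemma hypergraph_union (T : Set (ι → W)) :
    hypergraph c (S ∪ T) = hypergraph c S ∪ hypergraph c T := by
  ext s
  simp only [mem_union, mem_hypergraph, Set.mem_union, or_and_right, exists_or]

lemma exists_hypergraph_eq_of_subset {A : Finset (Finset ℕ)} (hA : A ⊆ hypergraph c S) :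
    ∃ T ⊆ S, hypergraph c T = A := by
  refine ⟨{e ∈ S | edgeSet c e ∈ A}, Set.sep_subset _ _, ?_⟩
  ext s
  simp only [mem_hypergraph, Set.mem_ofPred_eq]
  constructor
  · rintro ⟨e, ⟨-, heA⟩, rfl⟩
    exact heA
  · intro hs
    obtain ⟨e, he, rfl⟩ := mem_hypergraph.1 (hA hs)
    exact ⟨e, ⟨he, hs⟩, rfl⟩

lemma intersecting_hypergraph (hS : IsIntersecting S) :
    (hypergraph c S : Set (Finset ℕ)).Intersecting := by
  intro s hs t ht
  obtain ⟨e, he, rfl⟩ := mem_hypergraph.1 hs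
  obtain ⟨f, hf, rfl⟩ := mem_hypergraph.1 ht
  exact fun h ↦ disjoint_edgeSet.1 h (hS e he f hf)

lemma isCover_hypergraph {B : Finset (ι × W)} (hB : Covers B S) :
    IsCover (hypergraph c S) (B.map c) := by
  intro s hs
  obtain ⟨e, he, rfl⟩ := mem_hypergraph.1 hs
  obtain ⟨i, hi⟩ := hB e he
  exact ⟨c (i, e i), mem_inter.2 ⟨mem_edgeSet.2 ⟨i, rfl⟩, mem_map_of_mem c hi⟩⟩

lemma coverNumber_hypergraph_le {B : Finset (ι × W)} (hB : Covers B S) :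
    coverNumber (hypergraph c S) ≤ #B :=
  Nat.sInf_le ⟨B.map c, isCover_hypergraph hB, card_map c⟩

lemma covers_preimage {B : Finset ℕ} (hB : IsCover (hypergraph c S) B) :
    Covers (B.preimage c c.injective.injOn) S := by
  intro e he
  obtain ⟨n, hn⟩ := hB (edgeSet c e) (mem_hypergraph.2 ⟨e, he, rfl⟩)
  obtain ⟨hne, hnB⟩ := mem_inter.1 hn
  obtain ⟨i, rfl⟩ := mem_edgeSet.1 hne
  exact ⟨i, mem_preimage.2 hnB⟩

lemma le_coverNumber_hypergraph [Nonempty ι] {k : ℕ} (h : ∀ B, Covers B S → k ≤ #B) :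
    k ≤ coverNumber (hypergraph c S) := by
  have := Fintype.ofFinite W
  have hcov : Covers univ S := fun e _ ↦ ⟨Classical.arbitrary ι, mem_univ _⟩
  refine le_csInf ⟨_, _, isCover_hypergraph hcov, rfl⟩ ?_
  rintro n ⟨B, hB, rfl⟩
  exact (h _ (covers_preimage hB)).trans
    (card_le_card_of_injOn c (fun a ha ↦ mem_preimage.1 ha) c.injective.injOn)

end Encoding

section EncodedHypergraph

variable {ι W : Type*} [Fintype ι]

lemma isPartite_hypergraph [Fintype W] (c : ι × W ↪ ℕ) (S : Set (ι → W)) :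
    IsPartite (Fintype.card ι) (univ.map c) (hypergraph c S) := by
  let ε := (Fintype.equivFin ι).symm
  refine ⟨?_, fun k ↦ univ.image fun w ↦ c (ε k, w), ?_, ?_, ?_⟩
  · intro s hs n hn
    obtain ⟨e, -, rfl⟩ := mem_hypergraph.1 hs
    obtain ⟨i, rfl⟩ := mem_edgeSet.1 hn
    exact mem_map_of_mem c (mem_univ _)
  · intro j k hjk
    simp only [Finset.disjoint_left, mem_image, mem_univ, true_and]
    rintro _ ⟨w, rfl⟩ ⟨w', h⟩
    exact hjk (ε.injective (Prod.mk.inj (c.injective h)).1).symm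
  · ext n
    simp [ε.surjective.exists]
  · intro s hs k
    obtain ⟨e, -, rfl⟩ := mem_hypergraph.1 hs
    refine card_eq_one.2 ⟨c (ε k, e (ε k)), ?_⟩
    ext n
    simp only [mem_inter, mem_edgeSet, mem_image, mem_univ, true_and, mem_singleton]
    constructor
    · rintro ⟨⟨i, rfl⟩, w, hw⟩
      obtain ⟨rfl, -⟩ := Prod.mk.inj (c.injective hw)
      rfl
    · rintro rfl
      exact ⟨⟨_, rfl⟩, _, rfl⟩

lemma exists_isIndecomposableExtremal [Finite W] {q : ℕ} (hq : Fintype.card ι = q + 1)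
    {S₁ S₂ : Set (ι → W)} (h₁ : IsIntersecting S₁) (h₂ : IsIntersecting S₂)
    (hmatching : ∃ e ∈ S₁, ∃ f ∈ S₂, ¬ Meets e f)
    (hle : ∀ B, Covers B (S₁ ∪ S₂) → 2 * q ≤ #B) (hge : ∃ B, Covers B (S₁ ∪ S₂) ∧ #B ≤ 2 * q)
    (hsep : ∀ T₁ ⊆ S₁, ∀ T₂ ⊆ S₂, (∀ e ∈ T₁, ∀ f ∈ T₂, ¬ Meets e f) →
      (∃ B, Covers B T₁ ∧ #B < q) ∨ ∃ B, Covers B T₂ ∧ #B < q) :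
    ∃ (V : Finset ℕ) (E : Finset (Finset ℕ)), IsIndecomposableExtremal q V E := by
  have : Nonempty ι := Fintype.card_pos_iff.1 (by omega)
  have := Fintype.ofFinite W
  let c : ι × W ↪ ℕ := (Fintype.equivFin (ι × W)).toEmbedding.trans Fin.valEmbedding
  refine ⟨univ.map c, hypergraph c (S₁ ∪ S₂), hq ▸ isPartite_hypergraph c _, ?_, ?_, ?_⟩
  · obtain ⟨e, he, f, hf, hef⟩ := hmatching
    apply le_antisymm
    · rw [hypergraph_union]
      exact matchingNumber_union_le_two (intersecting_hypergraph h₁) (intersecting_hypergraph h₂)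
    · exact two_le_matchingNumber (mem_hypergraph.2 ⟨e, .inl he, rfl⟩)
        (mem_hypergraph.2 ⟨f, .inr hf, rfl⟩) (edgeSet_ne hef) (disjoint_edgeSet.2 hef)
  · obtain ⟨B, hB, hBq⟩ := hge
    exact ((coverNumber_hypergraph_le hB).trans hBq).antisymm (le_coverNumber_hypergraph hle)
  · rw [hypergraph_union]
    refine not_exists_disjoint_ryserSub (intersecting_hypergraph h₁) (intersecting_hypergraph h₂) ?_
    intro A hA B hB hAB
    obtain ⟨T₁, hT₁, rfl⟩ := exists_hypergraph_eq_of_subset hA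
    obtain ⟨T₂, hT₂, rfl⟩ := exists_hypergraph_eq_of_subset hB
    have hdisj : ∀ e ∈ T₁, ∀ f ∈ T₂, ¬ Meets e f := fun e he f hf ↦ disjoint_edgeSet.1 <|
      hAB.mono (le_sup (f := id) (mem_hypergraph.2 ⟨e, he, rfl⟩))
        (le_sup (f := id) (mem_hypergraph.2 ⟨f, hf, rfl⟩))
    exact (hsep T₁ hT₁ T₂ hT₂ hdisj).imp
      (fun ⟨C, hC, hCq⟩ ↦ (coverNumber_hypergraph_le hC).trans_lt hCq)
      (fun ⟨C, hC, hCq⟩ ↦ (coverNumber_hypergraph_le hC).trans_lt hCq)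

end EncodedHypergraph

section Critical

variable {ι ι' W : Type*}

/-- Away from the vertex `(i, v)`, the family `S` has a cover with fewer than `q` vertices. -/
def IsCritical (q : ℕ) (S : Set (ι → W)) (i : ι) (v : W) : Prop :=
  ∃ B : Finset (ι × W), #B < q ∧ Covers B {e ∈ S | e i ≠ v}

/-- An intersecting family with cover number at least `q` whose cover number drops below `q` once
the edges through any single vertex of the side `i` are removed. -/
structure IsCriticalRyser (q : ℕ) (i : ι) (S : Set (ι → W)) : Prop where
  isIntersecting : IsIntersecting S
  le_card : ∀ B, Covers B S → q ≤ #B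
  isCritical : ∀ v, IsCritical q S i v

/-- The edge `e` of `S` is the only one through its vertex on the side `i`. -/
def IsPendant (S : Set (ι → W)) (i : ι) (e : ι → W) : Prop :=
  e ∈ S ∧ ∀ f ∈ S, f i = e i → f = e

variable {q : ℕ} {S : Set (ι → W)} {i : ι}

lemma IsPendant.ne_apply {e f : ι → W} (he : IsPendant S i e) (hf : f ∈ S) (hef : e ≠ f) :
    e i ≠ f i := fun h ↦ hef (he.2 f hf h.symm).symm

/-- The covering set consists of a common vertex of `e` and `f` and of the vertices of the side `i`
other than `v` and those of `e` and `f`. -/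
lemma isCritical_of_isPendant_pair [Fintype W] (hW : Fintype.card W ≤ q + 1)
    (hS : IsIntersecting S) {e f : ι → W} (he : IsPendant S i e) (hf : IsPendant S i f)
    (hef : e ≠ f) {v : W} (hev : e i ≠ v) (hfv : f i ≠ v) : IsCritical q S i v := by
  classical
  obtain ⟨j, hj⟩ := hS e he.1 f hf.1
  refine ⟨insert (j, e j) (({v, e i, f i} : Finset W)ᶜ.image (Prod.mk i)), ?_, ?_⟩
  · have hthree : #{v, e i, f i} = 3 :=
      card_eq_three.2 ⟨_, _, _, hev.symm, hfv.symm, he.ne_apply hf.1 hef, rfl⟩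
    have hle := hthree ▸ card_le_univ ({v, e i, f i} : Finset W)
    calc _ ≤ #(({v, e i, f i} : Finset W)ᶜ.image (Prod.mk i)) + 1 := card_insert_le _ _
      _ ≤ #({v, e i, f i} : Finset W)ᶜ + 1 := by gcongr; exact card_image_le
      _ < q := by rw [card_compl, hthree]; omega
  · rintro g ⟨hg, hgv⟩
    by_cases hge : g i = e i
    · exact ⟨j, by simp [he.2 g hg hge]⟩
    by_cases hgf : g i = f i
    · exact ⟨j, by simp [hf.2 g hg hgf, hj]⟩
    · exact ⟨i, by simp [hgv, hge, hgf]⟩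

lemma isCritical_of_isPendant_triple [Fintype W] (hW : Fintype.card W ≤ q + 1)
    (hS : IsIntersecting S) {a b c : ι → W} (ha : IsPendant S i a) (hb : IsPendant S i b)
    (hc : IsPendant S i c) (hab : a ≠ b) (hac : a ≠ c) (hbc : b ≠ c) (v : W) :
    IsCritical q S i v := by
  by_cases hav : a i = v
  · exact isCritical_of_isPendant_pair hW hS hb hc hbc (hav ▸ hb.ne_apply ha.1 hab.symm)
      (hav ▸ hc.ne_apply ha.1 hac.symm)
  by_cases hbv : b i = v
  · exact isCritical_of_isPendant_pair hW hS ha hc hac hav (hbv ▸ hc.ne_apply hb.1 hbc.symm)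
  · exact isCritical_of_isPendant_pair hW hS ha hb hab hav hbv

lemma covers_image_comp_iff (φ : ι' ≃ ι) {B : Finset (ι' × W)} :
    Covers B ((· ∘ φ) '' S) ↔ Covers (B.map (φ.prodCongr (.refl W)).toEmbedding) S := by
  simp only [Covers, Set.forall_mem_image, Hits, Function.comp_apply]
  refine forall₂_congr fun e _ ↦ φ.exists_congr fun i ↦ ?_
  rw [← mem_map' (φ.prodCongr (.refl W)).toEmbedding]
  rfl

lemma IsCriticalRyser.image_comp (φ : ι' ≃ ι) {i : ι'} (hS : IsCriticalRyser q (φ i) S) :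
    IsCriticalRyser q i ((· ∘ φ) '' S) where
  isIntersecting := by
    rintro _ ⟨e, he, rfl⟩ _ ⟨f, hf, rfl⟩
    obtain ⟨j, hj⟩ := hS.isIntersecting e he f hf
    exact ⟨φ.symm j, by simpa using hj⟩
  le_card B hB := (hS.le_card _ ((covers_image_comp_iff φ).1 hB)).trans_eq (card_map _)
  isCritical v := by
    obtain ⟨B, hBq, hB⟩ := hS.isCritical v
    refine ⟨B.map (φ.symm.prodCongr (.refl W)).toEmbedding, (card_map _).trans_lt hBq, ?_⟩
    rintro _ ⟨⟨e, he, rfl⟩, hev⟩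
    obtain ⟨j, hj⟩ := hB e ⟨he, hev⟩
    exact ⟨φ.symm j, mem_map.2 ⟨_, hj, by simp⟩⟩

end Critical

section Join

variable {ι W₁ W₂ : Type*}

/-- The vertex set on the sides `W₁ ⊕ W₂` made up of `B₁` and `B₂`. -/
def join (B₁ : Finset (ι × W₁)) (B₂ : Finset (ι × W₂)) : Finset (ι × (W₁ ⊕ W₂)) :=
  (B₁.disjSum B₂).map (Equiv.prodSumDistrib ι W₁ W₂).symm.toEmbedding

variable {B₁ : Finset (ι × W₁)} {B₂ : Finset (ι × W₂)}

lemma card_join : #(join B₁ B₂) = #B₁ + #B₂ := by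
  rw [join, card_map, card_disjSum]

lemma mk_inl_mem_join {i : ι} {w : W₁} : (i, .inl w) ∈ join B₁ B₂ ↔ (i, w) ∈ B₁ := by
  simp [join]

lemma mk_inr_mem_join {i : ι} {w : W₂} : (i, .inr w) ∈ join B₁ B₂ ↔ (i, w) ∈ B₂ := by
  simp [join]

lemma hits_join_inl {e : ι → W₁} : Hits (join B₁ B₂) (.inl ∘ e) ↔ Hits B₁ e :=
  exists_congr fun _ ↦ mk_inl_mem_join

lemma hits_join_inr {e : ι → W₂} : Hits (join B₁ B₂) (.inr ∘ e) ↔ Hits B₂ e :=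
  exists_congr fun _ ↦ mk_inr_mem_join

lemma exists_eq_join (B : Finset (ι × (W₁ ⊕ W₂))) : ∃ B₁ B₂, B = join B₁ B₂ := by
  refine ⟨(B.map (Equiv.prodSumDistrib ι W₁ W₂).toEmbedding).toLeft,
    (B.map (Equiv.prodSumDistrib ι W₁ W₂).toEmbedding).toRight, ?_⟩
  rw [join, toLeft_disjSum_toRight, map_map]
  simp

end Join

section Pencil

variable {F W : Type*}

/-- The vertices of `B` on the side `none`. -/
noncomputable def labels (B : Finset (Option F × W)) : Finset W :=
  B.preimage (Prod.mk none) (Prod.mk_right_injective none).injOn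

/-- The vertices of `B` on the other sides; the pair `(μ, b)` is the vertex `φ b` of the side
`some μ`, and is thought of as the line of slope `μ` and intercept `b`. -/
noncomputable def lines (φ : F ↪ W) (B : Finset (Option F × W)) : Finset (F × F) :=
  B.preimage (Function.Embedding.some.prodMap φ) (Function.Embedding.injective _).injOn

variable {φ : F ↪ W} {l l' : W} {B : Finset (Option F × W)}

@[simp] lemma mem_labels : l ∈ labels B ↔ (none, l) ∈ B := mem_preimage

@[simp] lemma mem_lines {μ b : F} : (μ, b) ∈ lines φ B ↔ (some μ, φ b) ∈ B := mem_preimage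

lemma card_labels_add_card_lines_le (φ : F ↪ W) (B : Finset (Option F × W)) :
    #(labels B) + #(lines φ B) ≤ #B := by
  classical
  rw [← card_image_of_injective (labels B) (Prod.mk_right_injective (none : Option F)),
    ← card_map (Function.Embedding.some.prodMap φ), ← card_union_of_disjoint]
  · refine card_le_card (union_subset ?_ ?_)
    · exact image_subset_iff.2 fun _ ↦ mem_labels.1
    · exact map_subset_iff_subset_preimage.2 Subset.rfl
  · simp [Finset.disjoint_left]

variable [Field F]

/-- The edge attached to the point `(x, y)` of the affine plane over `F`, with vertex `l` on the
side `none`. The side `some μ` is the parallel class of slope `μ`, on which the vertex `φ b` stands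
for the line of intercept `b`. -/
def pencil (φ : F ↪ W) (l : W) (x y : F) : Option F → W :=
  fun i ↦ i.elim l fun μ ↦ φ (y - μ * x)

variable {x y x' y' : F}

@[simp] lemma pencil_none : pencil φ l x y none = l := rfl

@[simp] lemma pencil_some (μ : F) : pencil φ l x y (some μ) = φ (y - μ * x) := rfl

lemma meets_pencil (hx : x ≠ x') : Meets (pencil φ l x y) (pencil φ l' x' y') := by
  have hx' := sub_ne_zero.2 hx
  refine ⟨some ((y - y') / (x - x')), congrArg φ ?_⟩
  field_simp
  ring

lemma hits_pencil : Hits B (pencil φ l x y) ↔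
    l ∈ labels B ∨ ∃ n ∈ lines φ B, n.1 * x + n.2 = y := by
  simp [Hits, Option.exists, ← eq_sub_iff_add_eq']

lemma card_le_card_of_column_covered {N : Finset (F × F)} {T : Finset F}
    (h : ∀ y ∈ T, ∃ n ∈ N, n.1 * x + n.2 = y) : #T ≤ #N :=
  card_le_card_of_surjOn (fun n ↦ n.1 * x + n.2) h

end Pencil

section PuncturedPlane

variable (F : Type*) [Field F]

/-- The affine plane over `F` without the column `x = 0`, the side `none` being the class of the
vertical lines. -/
def puncturedPlane : Set (Option F → F) :=
  {e | ∃ x y, x ≠ 0 ∧ e = pencil (.refl F) x x y}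

variable {F}

lemma isIntersecting_puncturedPlane : IsIntersecting (puncturedPlane F) := by
  rintro _ ⟨x, y, -, rfl⟩ _ ⟨x', y', -, rfl⟩
  by_cases h : x = x'
  · exact ⟨none, h⟩
  · exact meets_pencil h

variable [Fintype F]

lemma exists_covers_puncturedPlane :
    ∃ B, Covers B (puncturedPlane F) ∧ #B + 1 = Fintype.card F := by
  classical
  refine ⟨{none} ×ˢ univ.erase 0, ?_, ?_⟩
  · rintro _ ⟨x, y, hx, rfl⟩
    exact ⟨none, by simp [hx]⟩
  · rw [card_product, card_singleton, one_mul, card_erase_add_one (mem_univ _), card_univ]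

lemma card_le_of_covers_puncturedPlane {B : Finset (Option F × F)}
    (hB : Covers B (puncturedPlane F)) :
    Fintype.card F ≤ #(lines (.refl F) B) ∨ Fintype.card F ≤ #(labels B) + 1 := by
  classical
  by_cases hlabels : ∀ x ≠ 0, x ∈ labels B
  · right
    rw [← card_univ, ← card_erase_add_one (mem_univ (0 : F))]
    gcongr
    exact fun x hx ↦ hlabels x (ne_of_mem_erase hx)
  · left
    push Not at hlabels
    obtain ⟨x, hx, hxB⟩ := hlabels
    exact card_le_card_of_column_covered (x := x) fun y _ ↦
      (hits_pencil.1 (hB _ ⟨x, y, hx, rfl⟩)).resolve_left hxB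

lemma card_le_card_add_one_of_covers_puncturedPlane {B : Finset (Option F × F)}
    (hB : Covers B (puncturedPlane F)) : Fintype.card F ≤ #B + 1 := by
  have hcard := card_labels_add_card_lines_le (.refl F) B
  have := card_le_of_covers_puncturedPlane hB
  omega

lemma card_le_card_of_covers_puncturedPlane {B : Finset (Option F × F)}
    (hB : Covers B (puncturedPlane F)) {μ b : F} (hμ : (some μ, b) ∈ B) : Fintype.card F ≤ #B := by
  have hcard := card_labels_add_card_lines_le (.refl F) B
  have hpos : 0 < #(lines (.refl F) B) := card_pos.2 ⟨(μ, b), mem_lines.2 hμ⟩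
  have := card_le_of_covers_puncturedPlane hB
  omega

end PuncturedPlane

section Glue

variable {F W : Type*} [Field F]

/-- The edge passing through the vertex `v` of the second part on the side `none`, and through the
lines of the removed point `(0, 0)` of the punctured plane on all other sides. -/
def bridge (v : W) : Option F → F ⊕ W := fun i ↦ i.elim (.inr v) fun _ ↦ .inl 0

variable (F W) in
/-- The punctured plane on the sides `F`, together with its bridges to the sides `W`. -/
def bridgedPlane : Set (Option F → F ⊕ W) :=
  (Sum.inl ∘ ·) '' puncturedPlane F ∪ Set.range bridge

lemma isIntersecting_bridgedPlane : IsIntersecting (bridgedPlane F W) := by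
  refine isIntersecting_union ?_ ?_ ?_
  · rintro _ ⟨e, he, rfl⟩ _ ⟨f, hf, rfl⟩
    exact (isIntersecting_puncturedPlane e he f hf).comp Sum.inl
  · rintro _ ⟨v, rfl⟩ _ ⟨w, rfl⟩
    exact ⟨some 0, rfl⟩
  · rintro _ ⟨_, ⟨x, y, hx, rfl⟩, rfl⟩ _ ⟨v, rfl⟩
    exact ⟨some (y / x), by simp [bridge, hx]⟩

lemma hits_join_bridge {B₁ : Finset (Option F × F)} {B₂ : Finset (Option F × W)} {v : W} :
    Hits (join B₁ B₂) (bridge v) ↔ (none, v) ∈ B₂ ∨ ∃ μ, (some μ, (0 : F)) ∈ B₁ := by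
  simp [Hits, Option.exists, bridge, mk_inl_mem_join, mk_inr_mem_join]

variable [Fintype F] {I : Set (Option F → W)}

lemma two_mul_card_le_of_covers [Fintype W] (hW : Fintype.card F < Fintype.card W)
    (hI : IsCriticalRyser (Fintype.card F) none I) {B : Finset (Option F × (F ⊕ W))}
    (hB : Covers B (bridgedPlane F W ∪ (Sum.inr ∘ ·) '' I)) : 2 * Fintype.card F ≤ #B := by
  classical
  obtain ⟨B₁, B₂, rfl⟩ := exists_eq_join B
  have hB₁ : Covers B₁ (puncturedPlane F) := fun e he ↦
    hits_join_inl.1 (hB _ (.inl (.inl ⟨e, he, rfl⟩)))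
  have hB₂ : Fintype.card F ≤ #B₂ := hI.le_card B₂ fun e he ↦
    hits_join_inr.1 (hB _ (.inr ⟨e, he, rfl⟩))
  rw [card_join]
  by_cases hside : ∀ v : W, (none, v) ∈ B₂
  · have hle := card_le_card_add_one_of_covers_puncturedPlane hB₁
    have : Fintype.card W ≤ #B₂ :=
      card_le_card_of_injOn (Prod.mk none) (fun v _ ↦ hside v) (Prod.mk_right_injective none).injOn
    omega
  · push Not at hside
    obtain ⟨v, hv⟩ := hside
    obtain ⟨μ, hμ⟩ := (hits_join_bridge.1 (hB _ (.inl (.inr ⟨v, rfl⟩)))).resolve_left hv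
    have := card_le_card_of_covers_puncturedPlane hB₁ hμ
    omega

lemma exists_covers_card_le_two_mul_card [Nonempty W]
    (hI : IsCriticalRyser (Fintype.card F) none I) :
    ∃ B, Covers B (bridgedPlane F W ∪ (Sum.inr ∘ ·) '' I) ∧ #B ≤ 2 * Fintype.card F := by
  classical
  obtain ⟨B₁, hB₁, hcard₁⟩ := exists_covers_puncturedPlane (F := F)
  obtain ⟨B₂, hcard₂, hB₂⟩ := hI.isCritical (Classical.arbitrary W)
  refine ⟨join (insert (some 0, 0) B₁) (insert (none, Classical.arbitrary W) B₂), ?_, ?_⟩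
  · rintro _ ((⟨e, he, rfl⟩ | ⟨w, rfl⟩) | ⟨e, he, rfl⟩)
    · exact hits_join_inl.2 ((hB₁ e he).mono (subset_insert _ _))
    · exact hits_join_bridge.2 (.inr ⟨0, mem_insert_self _ _⟩)
    · refine hits_join_inr.2 ?_
      by_cases hev : e none = Classical.arbitrary W
      · exact ⟨none, hev ▸ mem_insert_self _ _⟩
      · exact (hB₂ e ⟨he, hev⟩).mono (subset_insert _ _)
  · have hinsert₁ := card_insert_le (some (0 : F), (0 : F)) B₁
    have hinsert₂ := card_insert_le ((none : Option F), Classical.arbitrary W) B₂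
    rw [card_join]
    omega

lemma exists_covers_card_lt_of_disjoint (hI : ∀ v, IsCritical (Fintype.card F) I none v)
    {T₁ T₂ : Set (Option F → F ⊕ W)} (hT₁ : T₁ ⊆ bridgedPlane F W)
    (hT₂ : T₂ ⊆ (Sum.inr ∘ ·) '' I) (hT : ∀ e ∈ T₁, ∀ f ∈ T₂, ¬ Meets e f) :
    (∃ B, Covers B T₁ ∧ #B < Fintype.card F) ∨ ∃ B, Covers B T₂ ∧ #B < Fintype.card F := by
  by_cases hbridge : ∃ v, bridge v ∈ T₁
  · right
    obtain ⟨v, hv⟩ := hbridge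
    obtain ⟨B, hBcard, hB⟩ := hI v
    refine ⟨join ∅ B, ?_, by rwa [card_join, card_empty, zero_add]⟩
    intro f hf
    obtain ⟨e, he, rfl⟩ := hT₂ hf
    exact hits_join_inr.2 (hB e ⟨he, fun hev ↦ hT _ hv _ hf ⟨none, by simp [bridge, hev]⟩⟩)
  · left
    obtain ⟨B, hB, hBcard⟩ := exists_covers_puncturedPlane (F := F)
    refine ⟨join B ∅, ?_, by rw [card_join, card_empty]; omega⟩
    intro f hf
    obtain ⟨e, he, rfl⟩ | ⟨v, rfl⟩ := hT₁ hf
    · exact hits_join_inl.2 (hB e he)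
    · exact absurd ⟨v, hf⟩ hbridge

theorem exists_isIndecomposableExtremal_of_isCriticalRyser [Fintype W]
    (hW : Fintype.card F < Fintype.card W) (hI : IsCriticalRyser (Fintype.card F) none I) :
    ∃ (V : Finset ℕ) (E : Finset (Finset ℕ)),
      IsIndecomposableExtremal (Fintype.card F) V E := by
  have : Nonempty W := Fintype.card_pos_iff.1 (by omega)
  refine exists_isIndecomposableExtremal Fintype.card_option isIntersecting_bridgedPlane
    (S₂ := (Sum.inr ∘ ·) '' I) ?_ ?_ (fun B ↦ two_mul_card_le_of_covers hW hI)
    (exists_covers_card_le_two_mul_card hI)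
    fun T₁ hT₁ T₂ hT₂ ↦ exists_covers_card_lt_of_disjoint hI.isCritical hT₁ hT₂
  · rintro _ ⟨e, he, rfl⟩ _ ⟨f, hf, rfl⟩
    exact (hI.isIntersecting e he f hf).comp Sum.inr
  · obtain ⟨f, hf⟩ : I.Nonempty := by
      by_contra hempty
      have := hI.le_card ∅ fun e he ↦ (hempty ⟨e, he⟩).elim
      exact Fintype.card_ne_zero (Nat.le_zero.1 this)
    refine ⟨_, .inl ⟨_, ⟨1, 0, one_ne_zero, rfl⟩, rfl⟩, _, ⟨f, hf, rfl⟩, ?_⟩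
    rintro ⟨i, hi⟩
    exact Sum.inl_ne_inr hi

end Glue

section FiniteSum

lemma mapsTo_of_surjOn_of_card_le {α β : Type*} {S : Finset α} {T : Finset β} {f : α → β}
    (hf : Set.SurjOn f S T) (hcard : #S ≤ #T) : Set.MapsTo f S T := by
  classical
  have himage : T = S.image f :=
    eq_of_subset_of_card_le (by rwa [← coe_subset, coe_image]) (card_image_le.trans hcard)
  intro a ha
  rw [himage]
  exact mem_image_of_mem f ha

variable {α F : Type*} [Fintype F] {S : Finset α} {f : α → F} {a b c : α}

lemma bijOn_erase_of_map_eq [DecidableEq α] (hS : #S = Fintype.card F + 1)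
    (hf : Set.SurjOn f S Set.univ) (ha : a ∈ S) (hb : b ∈ S) (hab : a ≠ b) (h : f a = f b) :
    Set.BijOn f (S.erase a) (univ : Finset F) := by
  have hsurj : Set.SurjOn f (S.erase a) (univ : Finset F) := by
    intro y _
    obtain ⟨n, hn, rfl⟩ := hf (Set.mem_univ y)
    by_cases hna : n = a
    · exact ⟨b, mem_erase.2 ⟨hab.symm, hb⟩, by rw [hna, h]⟩
    · exact ⟨n, mem_erase.2 ⟨hna, hn⟩, rfl⟩
  have hmaps : Set.MapsTo f (S.erase a) (univ : Finset F) := fun _ _ ↦ mem_univ _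
  refine ⟨hmaps, injOn_of_surjOn_of_card_le f hmaps hsurj ?_, hsurj⟩
  rw [card_erase_of_mem ha, hS, card_univ, Nat.add_sub_cancel]

lemma eq_or_eq_of_map_eq (hS : #S = Fintype.card F + 1) (hf : Set.SurjOn f S Set.univ)
    (ha : a ∈ S) (hb : b ∈ S) (hc : c ∈ S) (hab : a ≠ b) (h : f a = f b) (h' : f a = f c) :
    a = c ∨ b = c := by
  classical
  by_contra! hne
  exact hne.2 <| (bijOn_erase_of_map_eq hS hf ha hb hab h).injOn (mem_erase.2 ⟨hab.symm, hb⟩)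
    (mem_erase.2 ⟨hne.1.symm, hc⟩) (h.symm.trans h')

lemma map_eq_sum_of_map_eq [Field F] (hF : 3 ≤ Fintype.card F) (hS : #S = Fintype.card F + 1)
    (hf : Set.SurjOn f S Set.univ) (ha : a ∈ S) (hb : b ∈ S) (hab : a ≠ b) (h : f a = f b) :
    f a = ∑ n ∈ S, f n := by
  classical
  have hbij := bijOn_erase_of_map_eq hS hf ha hb hab h
  have hsum : ∑ y : F, y = 0 := by
    simpa using FiniteField.sum_pow_lt_card_sub_one F 1 (by omega)
  have hrest : ∑ n ∈ S.erase a, f n = 0 :=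
    (sum_nbij f hbij.mapsTo hbij.injOn hbij.surjOn fun _ _ ↦ rfl).trans hsum
  rw [← add_sum_erase S f ha, hrest, add_zero]

end FiniteSum

section Lines

variable {F : Type*} [Field F]

/-- Two lines, given by slope and intercept, which are parallel or meet on one of the columns
`x = 0` and `x = 1`. -/
def NearlyParallel (n n' : F × F) : Prop :=
  n.1 = n'.1 ∨ n.2 = n'.2 ∨ n.1 + n.2 = n'.1 + n'.2

lemma nearlyParallel_or_exists_ordinate_eq (n n' : F × F) :
    NearlyParallel n n' ∨ ∃ x, x ≠ 0 ∧ x ≠ 1 ∧ n.1 * x + n.2 = n'.1 * x + n'.2 := by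
  refine or_iff_not_imp_left.2 fun hn ↦ ?_
  simp only [NearlyParallel, not_or] at hn
  obtain ⟨hslope, hzero, hone⟩ := hn
  have hslope' : n.1 - n'.1 ≠ 0 := sub_ne_zero.2 hslope
  refine ⟨(n'.2 - n.2) / (n.1 - n'.1), ?_, ?_, by field_simp; ring⟩
  · exact div_ne_zero (sub_ne_zero.2 (Ne.symm hzero)) hslope'
  · rw [Ne, div_eq_one_iff_eq hslope']
    exact fun h ↦ hone (by linear_combination -h)

/-- A line nearly parallel to two lines of equal intercept and to a third line is one of at most
four. -/
lemma snd_eq_of_pairwise_nearlyParallel {S : Finset (F × F)} (hS : 5 ≤ #S)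
    (hpar : ∀ a ∈ S, ∀ b ∈ S, a ≠ b → NearlyParallel a b) {p p' r : F × F} (hp : p ∈ S)
    (hp' : p' ∈ S) (hr : r ∈ S) (hne : p ≠ p') (h : p.2 = p'.2) : r.2 = p.2 := by
  classical
  by_contra hrp
  have hsub : S ⊆ {(p.1, p'.1 + p'.2 - p.1), (p'.1, p.1 + p.2 - p'.1), (r.1, p.2),
      (r.1 + r.2 - p.2, p.2)} := by
    intro w hw
    have hwp := hpar w hw p hp
    have hwp' := hpar w hw p' hp'
    have hwr := hpar w hw r hr
    simp only [mem_insert, mem_singleton, Prod.ext_iff, NearlyParallel, ne_eq] at *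
    grind
  exact absurd (hS.trans ((card_le_card hsub).trans card_le_four)) (by decide)

/-- Every point of the affine plane outside the columns `x = 0` and `x = 1` lies on a line of
`C`. -/
def CoversInnerColumns (C : Finset (F × F)) : Prop :=
  ∀ x, x ≠ 0 → x ≠ 1 → Set.SurjOn (fun n : F × F ↦ n.1 * x + n.2) C Set.univ

variable [Fintype F] {C : Finset (F × F)} {n n' : F × F}

/-- All collisions of `q + 1` lines covering the inner columns happen on a single line, the sum of
these lines, since the elements of `F` sum to zero. -/
lemma CoversInnerColumns.ordinate_eq_ordinate_sum (hC : CoversInnerColumns C)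
    (hF : 3 ≤ Fintype.card F) (hcard : #C = Fintype.card F + 1) {x : F} (hx0 : x ≠ 0)
    (hx1 : x ≠ 1) (hn : n ∈ C) (hn' : n' ∈ C) (hne : n ≠ n')
    (h : n.1 * x + n.2 = n'.1 * x + n'.2) :
    n.1 * x + n.2 = (∑ k ∈ C, k).1 * x + (∑ k ∈ C, k).2 := by
  rw [Prod.fst_sum, Prod.snd_sum, sum_mul, ← sum_add_distrib]
  exact map_eq_sum_of_map_eq hF hcard (hC x hx0 hx1) hn hn' hne h

lemma CoversInnerColumns.nearlyParallel_of_sum_mem (hC : CoversInnerColumns C)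
    (hF : 3 ≤ Fintype.card F) (hcard : #C = Fintype.card F + 1) (hsum : ∑ k ∈ C, k ∈ C)
    (hn : n ∈ C) (hn' : n' ∈ C) (hne : n ≠ n') (hnsum : n ≠ ∑ k ∈ C, k)
    (hnsum' : n' ≠ ∑ k ∈ C, k) : NearlyParallel n n' := by
  refine (nearlyParallel_or_exists_ordinate_eq n n').resolve_right ?_
  rintro ⟨x, hx0, hx1, h⟩
  have hcollision := hC.ordinate_eq_ordinate_sum hF hcard hx0 hx1 hn hn' hne h
  exact (eq_or_eq_of_map_eq hcard (hC x hx0 hx1) hn hn' hsum hne h hcollision).elim hnsum hnsum'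

lemma CoversInnerColumns.sum_notMem (hC : CoversInnerColumns C) (hF : 5 ≤ Fintype.card F)
    (hcard : #C = Fintype.card F + 1) {a a' b b' : F × F} (ha : a ∈ C) (ha' : a' ∈ C) (hb : b ∈ C)
    (hb' : b' ∈ C) (haa' : a ≠ a') (hbb' : b ≠ b') (haa'_snd : a.2 = a'.2)
    (hbb'_snd : b.2 = b'.2) (hab : a.2 ≠ b.2) (hsum_a' : a' ≠ ∑ k ∈ C, k)
    (hsum_b' : b' ≠ ∑ k ∈ C, k) : ∑ k ∈ C, k ∉ C := by
  classical
  intro hsum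
  have hsnd {p p' r : F × F} (hp : p ∈ C.erase (∑ k ∈ C, k)) (hp' : p' ∈ C.erase (∑ k ∈ C, k))
      (hr : r ∈ C.erase (∑ k ∈ C, k)) (hne : p ≠ p') (h : p.2 = p'.2) : r.2 = p.2 := by
    refine snd_eq_of_pairwise_nearlyParallel ?_ (fun n hn n' hn' hnn' ↦ ?_) hp hp' hr hne h
    · rw [card_erase_of_mem hsum]
      omega
    · exact hC.nearlyParallel_of_sum_mem (by omega) hcard hsum (mem_of_mem_erase hn)
        (mem_of_mem_erase hn') hnn' (ne_of_mem_erase hn) (ne_of_mem_erase hn')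
  have ha'_mem := mem_erase.2 ⟨hsum_a', ha'⟩
  have hb'_mem := mem_erase.2 ⟨hsum_b', hb'⟩
  by_cases hsum_a : a = ∑ k ∈ C, k
  · have hsum_b : b ≠ ∑ k ∈ C, k := fun h ↦ hab (by rw [hsum_a, h])
    have := hsnd (mem_erase.2 ⟨hsum_b, hb⟩) hb'_mem ha'_mem hbb' hbb'_snd
    exact hab (haa'_snd.trans this)
  · have := hsnd (mem_erase.2 ⟨hsum_a, ha⟩) ha'_mem hb'_mem haa' haa'_snd
    exact hab (this.symm.trans hbb'_snd.symm)

lemma CoversInnerColumns.nearlyParallel_of_sum_notMem (hC : CoversInnerColumns C)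
    (hF : 3 ≤ Fintype.card F) (hcard : #C = Fintype.card F + 1) (hsum : ∑ k ∈ C, k ∉ C)
    (hn : n ∈ C) (hn' : n' ∈ C) {u : F} (hne : n.1 * u + n.2 ≠ n'.1 * u + n'.2)
    (hu : n'.1 * u + n'.2 = (∑ k ∈ C, k).1 * u + (∑ k ∈ C, k).2) : NearlyParallel n n' := by
  refine (nearlyParallel_or_exists_ordinate_eq n n').resolve_right ?_
  rintro ⟨x, hx0, hx1, h⟩
  have hxu : x - u ≠ 0 := sub_ne_zero.2 (by rintro rfl; exact hne h)
  have hnn' : n' ≠ n := by rintro rfl; exact hne rfl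
  have hx := hC.ordinate_eq_ordinate_sum hF hcard hx0 hx1 hn' hn hnn' h.symm
  have hslope : n'.1 = (∑ k ∈ C, k).1 := mul_right_cancel₀ hxu (by linear_combination hx - hu)
  have hintercept : n'.2 = (∑ k ∈ C, k).2 := by rwa [hslope, add_right_inj] at hx
  exact hsum (Prod.ext hslope hintercept ▸ hn')

end Lines

section LineParameters

variable {F : Type*} [Field F]

/-- Conditions on the parameters of `doubleLineFamily`: the line `y = 1 + m * x` meets the line
`y = 0` in neither of the columns `0`, `1`, `s`, and the point `(1, t)` lies on none of the lines
`y = 0`, `y = 1`, `y = m * x` and `y = 1 + m * x`. -/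
structure Admissible (m t s : F) : Prop where
  m_ne_zero : m ≠ 0
  one_add_m_ne_zero : 1 + m ≠ 0
  t_ne_zero : t ≠ 0
  t_ne_one : t ≠ 1
  t_ne_m : t ≠ m
  t_ne_one_add_m : t ≠ 1 + m
  s_ne_zero : s ≠ 0
  s_ne_one : s ≠ 1
  one_add_m_mul_s_ne_zero : 1 + m * s ≠ 0

/-- Every point of the column `x` outside the lines `y = 0` and `y = 1 + m * x` lies on a line
of `N`. -/
def CoversGridColumn (m : F) (N : Finset (F × F)) (x : F) : Prop :=
  ∀ y, y ≠ 0 → y ≠ 1 + m * x → ∃ n ∈ N, n.1 * x + n.2 = y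

variable {m t s : F} {N : Finset (F × F)} {x : F}

lemma Admissible.exists_root (h : Admissible m t s) : ∃ u, u ≠ 0 ∧ u ≠ 1 ∧ 1 + m * u = 0 := by
  have hm := h.m_ne_zero
  have hroot : 1 + m * (-1 / m) = 0 := by field_simp; ring
  refine ⟨-1 / m, by simp [hm], fun hone ↦ h.one_add_m_ne_zero ?_, hroot⟩
  rwa [hone, mul_one] at hroot

lemma exists_admissible [Fintype F] (hF : 5 ≤ Fintype.card F) :
    ∃ m t s : F, Admissible m t s := by
  classical
  have exists_notMem (a b c d : F) : ∃ x, x ∉ ({a, b, c, d} : Finset F) := by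
    by_contra! hmem
    have : Fintype.card F ≤ 4 :=
      (card_univ.symm.trans_le (card_le_card fun x _ ↦ hmem x)).trans card_le_four
    omega
  obtain ⟨m, hm⟩ := exists_notMem 0 (-1) 0 0
  obtain ⟨t, ht⟩ := exists_notMem 0 1 m (1 + m)
  obtain ⟨s, hs⟩ := exists_notMem 0 1 (-1 / m) 0
  simp only [mem_insert, mem_singleton, not_or] at hm ht hs
  have hm' : 1 + m ≠ 0 := fun h ↦ hm.2.1 (by linear_combination h)
  have hs' : 1 + m * s ≠ 0 := fun h ↦
    hs.2.2.1 ((eq_div_iff hm.1).2 (by linear_combination h))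
  exact ⟨m, t, s, hm.1, hm', ht.1, ht.2.1, ht.2.2.1, ht.2.2.2, hs.1, hs.2.1, hs'⟩

lemma nearlyParallel_or_sub_eq_of_ordinate_ne {n n' : F × F}
    (h : ∀ x, x ≠ 0 → x ≠ 1 → 1 + m * x ≠ 0 → n.1 * x + n.2 ≠ n'.1 * x + n'.2) :
    NearlyParallel n n' ∨ n.1 - n'.1 = m * (n.2 - n'.2) := by
  refine (nearlyParallel_or_exists_ordinate_eq n n').imp_right ?_
  rintro ⟨x, hx0, hx1, hx⟩
  have hroot : 1 + m * x = 0 := by_contra fun hx' ↦ h x hx0 hx1 hx' hx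
  linear_combination m * hx * (-1) + (n.1 - n'.1) * hroot

lemma Admissible.add_ne_of_nearlyParallel (h : Admissible m t s) {n : F × F}
    (hO : NearlyParallel n (0, 0)) (hK : NearlyParallel n (m, 1)) : n.1 + n.2 ≠ t := by
  obtain ⟨hm0, -, ht0, ht1, htm, htm1, -, -, -⟩ := h
  rintro rfl
  simp only [NearlyParallel] at hO hK
  grind

lemma coversInnerColumns_insert_insert [DecidableEq F]
    (hgrid : ∀ x, x ≠ 0 → x ≠ 1 → CoversGridColumn m N x) :
    CoversInnerColumns (insert (0, 0) (insert (m, 1) N)) := by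
  intro x hx0 hx1 y _
  by_cases hy0 : y = 0
  · exact ⟨(0, 0), by simp, by simp [hy0]⟩
  by_cases hy1 : y = 1 + m * x
  · exact ⟨(m, 1), by simp, by simp [hy1, add_comm]⟩
  obtain ⟨n, hn, hny⟩ := hgrid x hx0 hx1 y hy0 hy1
  exact ⟨n, by simp [hn], hny⟩

variable [Fintype F]

lemma CoversGridColumn.card_le_card_add_two (hN : CoversGridColumn m N x) :
    Fintype.card F ≤ #N + 2 := by
  classical
  have hcard := card_add_card_compl ({0, 1 + m * x} : Finset F)
  have htwo := card_le_two (a := 0) (b := 1 + m * x)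
  have := card_le_card_of_column_covered (N := N) (T := {0, 1 + m * x}ᶜ) (x := x)
    fun y hy ↦ hN y (by simp_all) (by simp_all)
  omega

lemma CoversGridColumn.card_le_card_add_one (hN : CoversGridColumn m N x) (hx : 1 + m * x = 0) :
    Fintype.card F ≤ #N + 1 := by
  classical
  have hcard := card_erase_add_one (mem_univ (0 : F))
  have := card_le_card_of_column_covered (N := N) (T := univ.erase 0) (x := x)
    fun y hy ↦ hN y (ne_of_mem_erase hy) (hx ▸ ne_of_mem_erase hy)
  rw [card_univ] at hcard
  omega

lemma CoversGridColumn.injOn_and_ne (hN : CoversGridColumn m N x) (hx : 1 + m * x ≠ 0)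
    (hcard : #N + 2 ≤ Fintype.card F) : Set.InjOn (fun n : F × F ↦ n.1 * x + n.2) N ∧
      ∀ n ∈ N, n.1 * x + n.2 ≠ 0 ∧ n.1 * x + n.2 ≠ 1 + m * x := by
  classical
  have hT : #({0, 1 + m * x} : Finset F)ᶜ = Fintype.card F - 2 := by
    rw [card_compl, card_pair hx.symm]
  have hsurj : Set.SurjOn (fun n : F × F ↦ n.1 * x + n.2) N ({0, 1 + m * x}ᶜ : Finset F) :=
    fun y hy ↦ hN y (by simp_all) (by simp_all)
  have hmaps := mapsTo_of_surjOn_of_card_le hsurj (by omega)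
  have hinj := injOn_of_surjOn_of_card_le _ hmaps hsurj (by omega)
  exact ⟨hinj, fun n hn ↦ by simpa [and_comm] using hmaps hn⟩

lemma CoversGridColumn.ordinate_ne_zero (hN : CoversGridColumn m N x) (hx : 1 + m * x = 0)
    (hcard : #N < Fintype.card F) {n : F × F} (hn : n ∈ N) : n.1 * x + n.2 ≠ 0 := by
  classical
  have hsurj : Set.SurjOn (fun n : F × F ↦ n.1 * x + n.2) N (univ.erase (0 : F)) :=
    fun y hy ↦ hN y (ne_of_mem_erase hy) (hx ▸ ne_of_mem_erase hy)
  have hmaps := mapsTo_of_surjOn_of_card_le hsurj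
    (by rw [card_erase_of_mem (mem_univ _), card_univ]; omega)
  exact ne_of_mem_erase (hmaps hn)

lemma Admissible.card_lt_card_add_two (h : Admissible m t s)
    (hgrid : ∀ x, x ≠ 0 → x ≠ 1 → 1 + m * x ≠ 0 → CoversGridColumn m N x)
    (hO : (0, 1) ∈ N ∨ ∃ n ∈ N, n.1 ≠ 0 ∧ n.1 * s + n.2 = 0)
    (hK : (m, 0) ∈ N ∨ ∃ n ∈ N, n.1 ≠ m ∧ n.1 * s + n.2 = 1 + m * s)
    (ht : ∃ n ∈ N, n.1 + n.2 = t) : Fintype.card F < #N + 2 := by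
  by_contra! hcard
  have hcol {x : F} (hx0 : x ≠ 0) (hx1 : x ≠ 1) (hx : 1 + m * x ≠ 0) :=
    (hgrid x hx0 hx1 hx).injOn_and_ne hx hcard
  have hs := (hcol h.s_ne_zero h.s_ne_one h.one_add_m_mul_s_ne_zero).2
  have hO' : (0, 1) ∈ N := hO.resolve_right fun ⟨n, hn, _, hns⟩ ↦ (hs n hn).1 hns
  have hK' : (m, 0) ∈ N := hK.resolve_right fun ⟨n, hn, _, hns⟩ ↦ (hs n hn).2 hns
  obtain ⟨n, hn, hnt⟩ := ht
  have hnO : n ≠ (0, 1) := by rintro rfl; exact h.t_ne_one (by simpa using hnt.symm)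
  have hnK : n ≠ (m, 0) := by rintro rfl; exact h.t_ne_m (by simpa using hnt.symm)
  have hmem {n' : F × F} (hn' : n' ∈ N) (hne : n ≠ n') :
      NearlyParallel n n' ∨ n.1 - n'.1 = m * (n.2 - n'.2) :=
    nearlyParallel_or_sub_eq_of_ordinate_ne fun x hx0 hx1 hx heq ↦
      hne ((hcol hx0 hx1 hx).1 hn hn' heq)
  have hnO' := hmem hO' hnO
  have hnK' := hmem hK' hnK
  have hzero : NearlyParallel n (0, 0) ∨ n.1 - 0 = m * (n.2 - 0) :=
    nearlyParallel_or_sub_eq_of_ordinate_ne fun x hx0 hx1 hx heq ↦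
      ((hcol hx0 hx1 hx).2 n hn).1 (by simpa using heq)
  have hone : NearlyParallel n (m, 1) ∨ n.1 - m = m * (n.2 - 1) :=
    nearlyParallel_or_sub_eq_of_ordinate_ne fun x hx0 hx1 hx heq ↦
      ((hcol hx0 hx1 hx).2 n hn).2 (by simpa [add_comm] using heq)
  obtain ⟨hm0, hm1, ht0, ht1, htm, htm1, -, -, -⟩ := h
  subst hnt
  simp only [NearlyParallel] at hnO' hnK' hzero hone
  clear hcol hs hgrid hmem hO hK
  -- Every alternative is a linear equation in the slope and intercept of `n`, and admissibility
  -- rules out each choice of one equation per line.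
  grind

lemma Admissible.card_le_card (h : Admissible m t s) (hF : 5 ≤ Fintype.card F)
    (hgrid : ∀ x, x ≠ 0 → x ≠ 1 → CoversGridColumn m N x) (hzero : ∃ n ∈ N, n.2 = 0)
    (hone : ∃ n ∈ N, n.2 = 1) (ht : ∃ n ∈ N, n.1 + n.2 = t) : Fintype.card F ≤ #N := by
  classical
  by_contra! hcard
  obtain ⟨u, hu0, hu1, hu⟩ := h.exists_root
  have hne {n : F × F} (hn : n ∈ N) : n.1 * u + n.2 ≠ 0 :=
    (hgrid u hu0 hu1).ordinate_ne_zero hu hcard hn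
  have hO : ((0, 0) : F × F) ∉ N := fun hmem ↦ hne hmem (by simp)
  have hK : (m, 1) ∉ N := fun hmem ↦ hne hmem (by linear_combination hu)
  have hOK : ((0, 0) : F × F) ≠ (m, 1) := by simp
  let C : Finset (F × F) := insert (0, 0) (insert (m, 1) N)
  have hOC : (0, 0) ∈ C := mem_insert_self _ _
  have hKC : (m, 1) ∈ C := mem_insert_of_mem (mem_insert_self _ _)
  have hNC {n : F × F} (hn : n ∈ N) : n ∈ C := mem_insert_of_mem (mem_insert_of_mem hn)
  have hC : CoversInnerColumns C := coversInnerColumns_insert_insert hgrid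
  have hcardC : #C = Fintype.card F + 1 := by
    have := (hgrid u hu0 hu1).card_le_card_add_one hu
    rw [card_insert_of_notMem (by simp [hO]), card_insert_of_notMem hK]
    omega
  have hsum : (∑ k ∈ C, k).1 * u + (∑ k ∈ C, k).2 = 0 := by
    rw [← hC.ordinate_eq_ordinate_sum (by omega) hcardC hu0 hu1 hOC hKC hOK
      (by linear_combination -hu)]
    simp
  have hne_sum {n : F × F} (hn : n ∈ N) : n ≠ ∑ k ∈ C, k := fun heq ↦ hne hn (heq ▸ hsum)
  obtain ⟨n₀, hn₀, hn₀_snd⟩ := hzero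
  obtain ⟨n₁, hn₁, hn₁_snd⟩ := hone
  have hsumC := hC.sum_notMem hF hcardC hOC (hNC hn₀) hKC (hNC hn₁) (by rintro rfl; exact hO hn₀)
    (by rintro rfl; exact hK hn₁) hn₀_snd.symm hn₁_snd.symm zero_ne_one (hne_sum hn₀) (hne_sum hn₁)
  obtain ⟨n, hn, hnt⟩ := ht
  have hnO := hC.nearlyParallel_of_sum_notMem (u := u) (by omega) hcardC hsumC (hNC hn) hOC
    (by simpa using hne hn) (by simp [hsum])
  have hnK := hC.nearlyParallel_of_sum_notMem (u := u) (by omega) hcardC hsumC (hNC hn) hKC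
    (fun heq ↦ hne hn (heq.trans (by linear_combination hu))) (by linear_combination hu - hsum)
  exact h.add_ne_of_nearlyParallel hnO hnK hnt

end LineParameters

section Bent

variable {F W : Type*} [Field F] {φ : F ↪ W} {l l' : W} {x y x' y' σ σ' c c' : F}

open Classical in
/-- The edge of the point `(x, y)` with its line of slope `σ` replaced by the line of slope `σ` and
intercept `c`. -/
noncomputable def bent (φ : F ↪ W) (l : W) (x y σ c : F) : Option F → W :=
  Function.update (pencil φ l x y) (some σ) (φ c)

@[simp] lemma bent_none : bent φ l x y σ c none = l := by simp [bent]

@[simp] lemma bent_some_self : bent φ l x y σ c (some σ) = φ c := by simp [bent]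

lemma bent_some_of_ne {μ : F} (hμ : μ ≠ σ) : bent φ l x y σ c (some μ) = φ (y - μ * x) := by
  simp [bent, hμ]

lemma meets_pencil_bent (hx : x ≠ x') (hσ : y - y' ≠ σ * (x - x')) :
    Meets (pencil φ l x y) (bent φ l' x' y' σ c) := by
  have hx' := sub_ne_zero.2 hx
  refine ⟨some ((y - y') / (x - x')), ?_⟩
  rw [bent_some_of_ne (by rwa [ne_eq, div_eq_iff hx']), pencil_some]
  congr 1
  field_simp
  ring

lemma meets_pencil_bent_of_mem (h : σ * x + c = y) :
    Meets (pencil φ l x y) (bent φ l' x' y' σ c) :=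
  ⟨some σ, by simp [← h]⟩

lemma meets_pencil_bent_self {μ : F} (hμ : μ ≠ σ) :
    Meets (pencil φ l x y) (bent φ l' x y σ c) :=
  ⟨some μ, by rw [bent_some_of_ne hμ, pencil_some]⟩

lemma meets_bent_bent (hσ : σ' ≠ σ) (h : σ' * x + c' = y) :
    Meets (bent φ l x y σ c) (bent φ l' x' y' σ' c') :=
  ⟨some σ', by simp [bent_some_of_ne hσ, ← h]⟩

lemma meets_bent_bent_self : Meets (bent φ l x y σ c) (bent φ l' x' y' σ c) :=
  ⟨some σ, by simp⟩

lemma hits_bent {B : Finset (Option F × W)} : Hits B (bent φ l x y σ c) ↔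
    l ∈ labels B ∨ (σ, c) ∈ lines φ B ∨ ∃ n ∈ lines φ B, n.1 ≠ σ ∧ n.1 * x + n.2 = y := by
  have hsome : (∃ μ, (some μ, bent φ l x y σ c (some μ)) ∈ B) ↔
      (some σ, φ c) ∈ B ∨ ∃ μ ≠ σ, (some μ, φ (y - μ * x)) ∈ B := by
    constructor
    · rintro ⟨μ, hμ⟩
      by_cases h : μ = σ
      · subst h
        exact .inl (by simpa using hμ)
      · exact .inr ⟨μ, h, by rwa [bent_some_of_ne h] at hμ⟩
    · rintro (h | ⟨μ, h, hμ⟩)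
      · exact ⟨σ, by simpa using h⟩
      · exact ⟨μ, by rwa [bent_some_of_ne h]⟩
  simp only [Hits, Option.exists, bent_none, hsome, mem_labels, mem_lines, Prod.exists,
    ← eq_sub_iff_add_eq']
  grind

end Bent

section DoubleLine

variable {F : Type*} [Field F]

/-- The edge through `l` of the point `(x, 0)`, with `y = 0` replaced by `y = 1`. -/
noncomputable def bentZero (l x : F) : Option F → Option F :=
  bent .some (some l) x 0 0 1

/-- The edge through `l` of the point `(x, 1 + m * x)`, with `y = 1 + m * x` replaced by
`y = m * x`. -/
noncomputable def bentSlope (m l x : F) : Option F → Option F :=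
  bent .some (some l) x (1 + m * x) m 0

/-- The edges, through their vertical lines, of the points outside the columns `0` and `1` and
outside the lines `y = 0` and `y = 1 + m * x`. -/
def grid (m : F) : Set (Option F → Option F) :=
  {e | ∃ x y, x ≠ 0 ∧ x ≠ 1 ∧ y ≠ 0 ∧ y ≠ 1 + m * x ∧ e = pencil .some (some x) x y}

/-- The grid together with four edges through the column `s`. -/
noncomputable def doubleLineCore (m s : F) : Set (Option F → Option F) :=
  grid m ∪ {pencil .some (some s) 0 0, pencil .some (some s) 0 1, bentZero s s, bentSlope m s s}

/-- A critical family for `5 ≤ q`: the vertices `some x` of the side `none` are the columns, and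
the three edges outside the core are alone on their vertices `some 0`, `some 1` and `none`. -/
noncomputable def doubleLineFamily (m t s : F) : Set (Option F → Option F) :=
  insert (bentZero 0 0) (insert (bentSlope m 1 0)
    (insert (pencil .some none 1 t) (doubleLineCore m s)))

variable {m t s : F}

lemma isIntersecting_grid : IsIntersecting (grid m) := by
  rintro _ ⟨x, y, -, -, -, -, rfl⟩ _ ⟨x', y', -, -, -, -, rfl⟩
  by_cases h : x = x'
  · exact ⟨none, congrArg some h⟩
  · exact meets_pencil h

lemma meets_bentZero_of_mem_grid {e : Option F → Option F} (he : e ∈ grid m) {l x : F}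
    (h : x = 0 ∨ x = l) : Meets (bentZero l x) e := by
  obtain ⟨x', y', hx'0, -, hy', -, rfl⟩ := he
  by_cases hxx' : x' = x
  · obtain rfl : x = l := h.resolve_left (hxx' ▸ hx'0)
    exact ⟨none, by simp [bentZero, hxx']⟩
  · exact (meets_pencil_bent hxx' (by simpa using hy')).symm

lemma meets_bentSlope_of_mem_grid {e : Option F → Option F} (he : e ∈ grid m) {l x : F}
    (h : x = 0 ∨ x = l) : Meets (bentSlope m l x) e := by
  obtain ⟨x', y', hx'0, -, -, hy', rfl⟩ := he
  by_cases hxx' : x' = x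
  · obtain rfl : x = l := h.resolve_left (hxx' ▸ hx'0)
    exact ⟨none, by simp [bentSlope, hxx']⟩
  · exact (meets_pencil_bent hxx' fun heq ↦ hy' (by linear_combination heq)).symm

lemma isIntersecting_doubleLineCore : IsIntersecting (doubleLineCore m s) := by
  have hlabel : ∀ e ∈ ({pencil .some (some s) 0 0, pencil .some (some s) 0 1, bentZero s s,
      bentSlope m s s} : Set (Option F → Option F)), e none = some s := by
    rintro _ (rfl | rfl | rfl | rfl) <;> simp [bentZero, bentSlope]
  refine isIntersecting_union isIntersecting_grid
    (fun e he f hf ↦ ⟨none, (hlabel e he).trans (hlabel f hf).symm⟩) ?_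
  rintro e he _ (rfl | rfl | rfl | rfl)
  · obtain ⟨x, y, hx, -, -, -, rfl⟩ := he
    exact meets_pencil hx
  · obtain ⟨x, y, hx, -, -, -, rfl⟩ := he
    exact meets_pencil hx
  · exact (meets_bentZero_of_mem_grid he (.inr rfl)).symm
  · exact (meets_bentSlope_of_mem_grid he (.inr rfl)).symm

lemma Admissible.meets_pencil_one_bentZero (h : Admissible m t s) {l x : F} (hx : x ≠ 1) :
    Meets (pencil .some none 1 t) (bentZero l x) :=
  meets_pencil_bent hx.symm (by simpa using h.t_ne_zero)

lemma Admissible.meets_pencil_one_bentSlope (h : Admissible m t s) {l x : F} (hx : x ≠ 1) :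
    Meets (pencil .some none 1 t) (bentSlope m l x) :=
  meets_pencil_bent hx.symm fun heq ↦ h.t_ne_one_add_m (by linear_combination heq)

lemma Admissible.isIntersecting_doubleLineFamily (h : Admissible m t s) :
    IsIntersecting (doubleLineFamily m t s) := by
  have hm := h.m_ne_zero
  have hs := h.s_ne_one
  refine isIntersecting_insert (isIntersecting_insert
    (isIntersecting_insert isIntersecting_doubleLineCore ?_) ?_) ?_
  · rintro _ (⟨x, y, -, hx, -, -, rfl⟩ | rfl | rfl | rfl | rfl)
    · exact meets_pencil hx.symm
    · exact meets_pencil one_ne_zero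
    · exact meets_pencil one_ne_zero
    · exact h.meets_pencil_one_bentZero hs
    · exact h.meets_pencil_one_bentSlope hs
  · rintro _ (rfl | he | rfl | rfl | rfl | rfl)
    · exact (h.meets_pencil_one_bentSlope zero_ne_one).symm
    · exact meets_bentSlope_of_mem_grid he (.inl rfl)
    · exact (meets_pencil_bent_of_mem (by simp)).symm
    · exact ⟨some 0, by simp [bentSlope, bent_some_of_ne hm.symm]⟩
    · exact meets_bent_bent hm.symm (by simp)
    · exact meets_bent_bent_self
  · rintro _ (rfl | rfl | he | rfl | rfl | rfl | rfl)
    · exact meets_bent_bent hm (by simp)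
    · exact (h.meets_pencil_one_bentZero zero_ne_one).symm
    · exact meets_bentZero_of_mem_grid he (.inl rfl)
    · exact (meets_pencil_bent_self hm).symm
    · exact (meets_pencil_bent_of_mem (by simp)).symm
    · exact meets_bent_bent_self
    · exact meets_bent_bent hm (by simp)

lemma Admissible.exists_apply_none_eq (h : Admissible m t s) {e : Option F → Option F}
    (he : e ∈ doubleLineCore m s) : ∃ x, x ≠ 0 ∧ x ≠ 1 ∧ e none = some x := by
  obtain ⟨x, y, hx0, hx1, -, -, rfl⟩ | rfl | rfl | rfl | rfl := he
  · exact ⟨x, hx0, hx1, rfl⟩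
  all_goals exact ⟨s, h.s_ne_zero, h.s_ne_one, by simp [bentZero, bentSlope]⟩

lemma Admissible.isPendant_bentZero (h : Admissible m t s) :
    IsPendant (doubleLineFamily m t s) none (bentZero 0 0) := by
  refine ⟨.inl rfl, ?_⟩
  rintro e (rfl | rfl | rfl | he) heq
  · rfl
  · simp [bentZero, bentSlope] at heq
  · simp [bentZero] at heq
  · obtain ⟨x, hx0, -, hx⟩ := h.exists_apply_none_eq he
    simp [bentZero, hx, hx0] at heq

lemma Admissible.isPendant_bentSlope (h : Admissible m t s) :
    IsPendant (doubleLineFamily m t s) none (bentSlope m 1 0) := by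
  refine ⟨.inr (.inl rfl), ?_⟩
  rintro e (rfl | rfl | rfl | he) heq
  · simp [bentZero, bentSlope] at heq
  · rfl
  · simp [bentSlope] at heq
  · obtain ⟨x, -, hx1, hx⟩ := h.exists_apply_none_eq he
    simp [bentSlope, hx, hx1] at heq

lemma Admissible.isPendant_pencil (h : Admissible m t s) :
    IsPendant (doubleLineFamily m t s) none (pencil .some none 1 t) := by
  refine ⟨.inr (.inr (.inl rfl)), ?_⟩
  rintro e (rfl | rfl | rfl | he) heq
  · simp [bentZero] at heq
  · simp [bentSlope] at heq
  · rfl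
  · obtain ⟨x, -, -, hx⟩ := h.exists_apply_none_eq he
    simp [hx] at heq

lemma Admissible.isCritical_doubleLineFamily [Fintype F] (h : Admissible m t s) (v : Option F) :
    IsCritical (Fintype.card F) (doubleLineFamily m t s) none v := by
  refine isCritical_of_isPendant_triple Fintype.card_option.le h.isIntersecting_doubleLineFamily
    h.isPendant_bentZero h.isPendant_bentSlope h.isPendant_pencil ?_ ?_ ?_ v
  all_goals exact ne_of_apply_ne (· none) (by simp [bentZero, bentSlope])

lemma Admissible.not_exists_common_vertex (h : Admissible m t s) :
    ¬ ∃ i, bentZero (0 : F) 0 i = bentSlope m 1 0 i ∧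
      bentSlope m 1 0 i = pencil .some none 1 t i := by
  rintro ⟨_ | μ, h₁, h₂⟩
  · simp [bentZero, bentSlope] at h₁
  obtain rfl | hμ0 := eq_or_ne μ 0
  · simp [bentSlope, bent_some_of_ne h.m_ne_zero.symm, h.t_ne_one.symm] at h₂
  obtain rfl | hμm := eq_or_ne μ m
  · simp [bentSlope, sub_eq_zero, h.t_ne_m, eq_comm] at h₂
  · simp [bentZero, bentSlope, bent_some_of_ne hμ0, bent_some_of_ne hμm] at h₁

variable {B : Finset (Option F × Option F)}

lemma coversGridColumn_of_covers (hB : Covers B (doubleLineFamily m t s)) {x : F} (hx0 : x ≠ 0)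
    (hx1 : x ≠ 1) (hx : some x ∉ labels B) : CoversGridColumn m (lines .some B) x :=
  fun y hy0 hy1 ↦ (hits_pencil.1 (hB _ (.inr (.inr (.inr (.inl
    ⟨x, y, hx0, hx1, hy0, hy1, rfl⟩)))))).resolve_left hx

lemma exists_mem_lines_add_eq (hB : Covers B (doubleLineFamily m t s)) (hnone : none ∉ labels B) :
    ∃ n ∈ lines .some B, n.1 + n.2 = t := by
  simpa using (hits_pencil.1 (hB _ (.inr (.inr (.inl rfl))))).resolve_left hnone

variable [Fintype F]

/-- If `B` contained all columns other than `0` and `1`, then at most one vertex would be left for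
the three edges outside the core. -/
lemma Admissible.exists_notMem_labels (h : Admissible m t s)
    (hB : Covers B (doubleLineFamily m t s)) (hcard : #B < Fintype.card F) :
    ∃ x, x ≠ 0 ∧ x ≠ 1 ∧ some x ∉ labels B := by
  classical
  by_contra! hlabels
  let columns : Finset (Option F × Option F) :=
    ({0, 1} : Finset F)ᶜ.image fun x ↦ (none, some x)
  have hsub : columns ⊆ B := image_subset_iff.2 fun x hx ↦
    mem_labels.1 (hlabels x (by simp_all) (by simp_all))
  have hcolumns : #columns = Fintype.card F - 2 := by
    rw [card_image_of_injective _ fun x y ↦ by simp, card_compl, card_pair zero_ne_one]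
  have hone : #(B \ columns) ≤ 1 := by
    rw [card_sdiff_of_subset hsub]
    omega
  have hits_sdiff {e : Option F → Option F} (he : e ∈ doubleLineFamily m t s)
      (hnone : ∀ x, x ≠ 0 → x ≠ 1 → e none ≠ some x) : Hits (B \ columns) e := by
    refine (hB e he).imp fun i hi ↦ mem_sdiff.2 ⟨hi, fun hmem ↦ ?_⟩
    obtain ⟨x, hx, heq⟩ := mem_image.1 hmem
    obtain ⟨rfl, hex⟩ := Prod.mk.inj heq
    exact hnone x (by simp_all) (by simp_all) hex.symm
  obtain ⟨i, hi⟩ := hits_sdiff h.isPendant_bentZero.1 (by simp +contextual [bentZero, eq_comm])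
  obtain ⟨j, hj⟩ := hits_sdiff h.isPendant_bentSlope.1 (by simp +contextual [bentSlope, eq_comm])
  obtain ⟨k, hk⟩ := hits_sdiff h.isPendant_pencil.1 (by simp)
  obtain ⟨rfl, hij⟩ := Prod.mk.inj (card_le_one.1 hone _ hi _ hj)
  obtain ⟨rfl, hik⟩ := Prod.mk.inj (card_le_one.1 hone _ hj _ hk)
  exact h.not_exists_common_vertex ⟨i, hij, hik⟩

lemma Admissible.labels_ne_singleton_root (h : Admissible m t s)
    (hB : Covers B (doubleLineFamily m t s)) (hcard : #B < Fintype.card F) {u : F}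
    (hu : 1 + m * u = 0) : labels B ≠ {some u} := by
  intro hlabels
  have hmem {l : Option F} : l ∈ labels B ↔ l = some u := by rw [hlabels, mem_singleton]
  have hs : some s ∉ labels B := fun hmem' ↦
    h.one_add_m_mul_s_ne_zero (by rwa [Option.some_inj.1 (hmem.1 hmem')])
  have hlt := h.card_lt_card_add_two
    (fun x hx0 hx1 hx ↦ coversGridColumn_of_covers hB hx0 hx1 fun hmem' ↦
      hx (by rwa [Option.some_inj.1 (hmem.1 hmem')]))
    ((hits_bent.1 (hB (bentZero s s) (by simp [doubleLineFamily, doubleLineCore]))).resolve_left hs)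
    ((hits_bent.1 (hB (bentSlope m s s)
      (by simp [doubleLineFamily, doubleLineCore]))).resolve_left hs)
    (exists_mem_lines_add_eq hB (by simp [hlabels]))
  have := card_labels_add_card_lines_le .some B
  rw [hlabels, card_singleton] at this
  omega

lemma Admissible.labels_ne_empty (h : Admissible m t s) (hF : 5 ≤ Fintype.card F)
    (hB : Covers B (doubleLineFamily m t s)) (hcard : #B < Fintype.card F) : labels B ≠ ∅ := by
  intro hlabels
  have hnotMem {l : Option F} : l ∉ labels B := by simp [hlabels]
  have hle := h.card_le_card hF (N := lines .some B)
    (fun x hx0 hx1 ↦ coversGridColumn_of_covers hB hx0 hx1 hnotMem)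
    (by simpa using (hits_pencil.1 (hB (pencil .some (some s) 0 0)
      (by simp [doubleLineFamily, doubleLineCore]))).resolve_left hnotMem)
    (by simpa using (hits_pencil.1 (hB (pencil .some (some s) 0 1)
      (by simp [doubleLineFamily, doubleLineCore]))).resolve_left hnotMem)
    (exists_mem_lines_add_eq hB hnotMem)
  have := card_labels_add_card_lines_le .some B
  omega

lemma Admissible.card_le_of_covers (h : Admissible m t s) (hF : 5 ≤ Fintype.card F)
    (hB : Covers B (doubleLineFamily m t s)) : Fintype.card F ≤ #B := by
  by_contra! hcard
  obtain ⟨u, hu0, hu1, hu⟩ := h.exists_root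
  have hsum := card_labels_add_card_lines_le .some B
  by_cases hmem : some u ∈ labels B
  · obtain ⟨x, hx0, hx1, hx⟩ := h.exists_notMem_labels hB hcard
    have hlines := (coversGridColumn_of_covers hB hx0 hx1 hx).card_le_card_add_two
    exact h.labels_ne_singleton_root hB hcard hu
      (eq_of_subset_of_card_le (singleton_subset_iff.2 hmem) (by rw [card_singleton]; omega)).symm
  · have hlines := (coversGridColumn_of_covers hB hu0 hu1 hmem).card_le_card_add_one hu
    exact h.labels_ne_empty hF hB hcard (card_eq_zero.1 (by omega))

theorem Admissible.isCriticalRyser_doubleLineFamily (h : Admissible m t s)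
    (hF : 5 ≤ Fintype.card F) :
    IsCriticalRyser (Fintype.card F) none (doubleLineFamily m t s) where
  isIntersecting := h.isIntersecting_doubleLineFamily
  le_card _ := h.card_le_of_covers hF
  isCritical := h.isCritical_doubleLineFamily

end DoubleLine

section OrderFour

variable {ι W : Type*} [Fintype ι] [DecidableEq W]

/-- Branching on the vertex of the first edge used by a cover shows that no `k` vertices cover
the listed edges. -/
def noCover : ℕ → List (ι → W) → Bool
  | _, [] => false
  | 0, _ :: _ => true
  | k + 1, e :: es => decide (∀ i, noCover k (es.filter fun f ↦ f i ≠ e i))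

lemma lt_card_of_noCover {k : ℕ} {es : List (ι → W)} (h : noCover k es) {B : Finset (ι × W)}
    (hB : Covers B {e | e ∈ es}) : k < #B := by
  classical
  induction k generalizing es B with
  | zero =>
    match es with
    | [] => simp [noCover] at h
    | e :: es =>
      obtain ⟨i, hi⟩ := hB e List.mem_cons_self
      exact card_pos.2 ⟨_, hi⟩
  | succ k ih =>
    match es with
    | [] => simp [noCover] at h
    | e :: es =>
      obtain ⟨i, hi⟩ := hB e List.mem_cons_self
      have hk : k < #(B.erase (i, e i)) := by
        refine ih (of_decide_eq_true h i) fun f hf ↦ ?_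
        obtain ⟨hf, hfi⟩ := List.mem_filter.1 hf
        refine (hB f (List.mem_cons_of_mem _ hf)).imp fun j hj ↦ mem_erase.2 ⟨?_, hj⟩
        intro heq
        obtain ⟨rfl, heq⟩ := Prod.mk.inj heq
        exact of_decide_eq_true hfi heq
      rw [← card_erase_add_one hi]
      omega

/-- A critical family for `q = 4`, where no parameters are admissible since `0`, `1`, `m` and
`1 + m` exhaust the field. The last three edges are alone on their vertices of the side `0`. -/
def edgesFour : List (Fin 5 → Fin 5) :=
  [![2, 1, 3, 2, 0], ![2, 2, 0, 1, 3], ![2, 3, 1, 0, 2], ![3, 1, 2, 0, 3], ![3, 2, 1, 3, 0],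
   ![3, 3, 0, 2, 1], ![2, 0, 1, 0, 1], ![0, 2, 1, 2, 3], ![1, 1, 1, 1, 1], ![4, 2, 3, 0, 1]]

lemma isIntersecting_edgesFour : IsIntersecting {e | e ∈ edgesFour} := by
  simp [IsIntersecting, Meets, edgesFour, Fin.exists_fin_succ]

lemma isPendant_edgesFour {e : Fin 5 → Fin 5}
    (he : e ∈ [![0, 2, 1, 2, 3], ![1, 1, 1, 1, 1], ![4, 2, 3, 0, 1]]) :
    IsPendant {e | e ∈ edgesFour} 0 e := by
  have : ∀ e ∈ [![0, 2, 1, 2, 3], ![1, 1, 1, 1, 1], ![4, 2, 3, 0, 1]],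
      e ∈ edgesFour ∧ ∀ f ∈ edgesFour, f 0 = e 0 → f = e := by simp [edgesFour]
  exact this e he

theorem isCriticalRyser_edgesFour : IsCriticalRyser 4 0 {e | e ∈ edgesFour} where
  isIntersecting := isIntersecting_edgesFour
  le_card B hB := lt_card_of_noCover (k := 3) (by decide +kernel) hB
  isCritical := isCritical_of_isPendant_triple (Fintype.card_fin 5).le isIntersecting_edgesFour
    (isPendant_edgesFour (e := ![0, 2, 1, 2, 3]) (by simp))
    (isPendant_edgesFour (e := ![1, 1, 1, 1, 1]) (by simp))
    (isPendant_edgesFour (e := ![4, 2, 3, 0, 1]) (by simp))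
    (by decide) (by decide) (by decide)

end OrderFour

theorem exists_isIndecomposableExtremal_of_field (F : Type*) [Field F] [Fintype F]
    (hF : 4 ≤ Fintype.card F) :
    ∃ (V : Finset ℕ) (E : Finset (Finset ℕ)), IsIndecomposableExtremal (Fintype.card F) V E := by
  classical
  obtain hfour | hfive := hF.eq_or_lt
  · obtain ⟨ψ⟩ : Nonempty (Option F ≃ Fin 5) := Fintype.card_eq.1 (by simp [← hfour])
    let φ : Option F ≃ Fin 5 := ψ.trans (Equiv.swap (ψ none) 0)
    have hφ : φ none = 0 := by simp [φ]
    refine exists_isIndecomposableExtremal_of_isCriticalRyser (by simp [← hfour])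
      (I := (· ∘ φ) '' {e | e ∈ edgesFour}) (IsCriticalRyser.image_comp φ ?_)
    rw [hφ, ← hfour]
    exact isCriticalRyser_edgesFour
  · obtain ⟨m, t, s, h⟩ := exists_admissible (F := F) hfive
    exact exists_isIndecomposableExtremal_of_isCriticalRyser (by simp)
      (h.isCriticalRyser_doubleLineFamily hfive)

end RyserHypergraph

/-- For every prime power `q ≥ 4` there exists a `(q + 1)`-partite hypergraph `H` with matching
number `2` and vertex cover number `2q` that does not contain two vertex disjoint
subhypergraphs each of which is an intersecting `(q + 1)`-Ryser hypergraph. -/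
theorem statement4 (q : ℕ) (hpp : ∃ p k : ℕ, p.Prime ∧ 1 ≤ k ∧ q = p ^ k) (hq : 4 ≤ q) :
    ∃ (V : Finset ℕ) (E : Finset (Finset ℕ)),
      IsPartite (q + 1) V E ∧
      matchingNumber E = 2 ∧
      coverNumber E = 2 * q ∧
      ¬ ∃ E₁ E₂ : Finset (Finset ℕ),
          IsIntersectingRyserSub (q + 1) E E₁ ∧ IsIntersectingRyserSub (q + 1) E E₂ ∧
          Disjoint (E₁.sup id) (E₂.sup id) := by
  obtain ⟨p, k, hp, hk, rfl⟩ := hpp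
  have : Fact p.Prime := ⟨hp⟩
  have : Fintype (GaloisField p k) := Fintype.ofFinite _
  have hcard : Fintype.card (GaloisField p k) = p ^ k := by
    rw [← Nat.card_eq_fintype_card, GaloisField.card p k (by omega)]
  rw [← hcard] at hq ⊢
  exact RyserHypergraph.exists_isIndecomposableExtremal_of_field (GaloisField p k) hq
end

section
/- A blocking set in a projective plane of order n has size exactly n + 1 if and only if it is the set of points of some line of the plane. -/
/-!
Project a blocking set `B` from a point `q ∉ B` onto the pencil of lines through `q`. This map is
onto because `B` meets every line of the pencil. If `B` has at most as many points as the pencil has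
lines, it is therefore injective, so each line through `q` meets `B` only once. Hence a line that
meets such a `B` twice contains no point outside `B`, and counting shows that it is all of `B`.
-/

open Configuration

section

variable {P : Type*} (L : Type*) [Membership P L]

/-- A blocking set: a set of points meeting every line. The type `L` of lines is explicit because
it cannot be inferred from the set. -/
def IsBlockingSet (B : Set P) : Prop :=
  ∀ l : L, ∃ p ∈ B, p ∈ l

/-- The central projection of a set `B` from a point `q` outside it, sending each point of `B` to
the line joining it to `q`. -/
def centralProjection [HasLines P L] {B : Set P} {q : P} (hq : q ∉ B) (p : B) : {l : L // q ∈ l} :=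
  have hpq : p.1 ≠ q := ne_of_mem_of_not_mem p.2 hq
  ⟨HasLines.mkLine hpq, (HasLines.mkLine_ax hpq).2⟩

variable {L}

theorem centralProjection_eq_iff [HasLines P L] {B : Set P} {q : P} (hq : q ∉ B) {p : B}
    {l : {l : L // q ∈ l}} : centralProjection L hq p = l ↔ p.1 ∈ l.1 := by
  have hpq : p.1 ≠ q := ne_of_mem_of_not_mem p.2 hq
  obtain ⟨hp_join, hq_join⟩ := HasLines.mkLine_ax (L := L) hpq
  refine ⟨fun h ↦ h ▸ hp_join, fun hpl ↦ Subtype.ext ?_⟩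
  exact (Nondegenerate.eq_or_eq hp_join hq_join hpl l.2).resolve_left hpq

namespace IsBlockingSet

variable {B : Set P}

theorem nontrivial [Nondegenerate P L] [Nonempty L] (hB : IsBlockingSet L B) : B.Nontrivial := by
  obtain ⟨p, hpB, -⟩ := hB (Classical.arbitrary L)
  obtain ⟨l, hpl⟩ := Nondegenerate.exists_line (L := L) p
  obtain ⟨r, hrB, hrl⟩ := hB l
  exact ⟨r, hrB, p, hpB, ne_of_mem_of_not_mem hrl hpl⟩

theorem centralProjection_surjective [HasLines P L] (hB : IsBlockingSet L B) {q : P} (hq : q ∉ B) :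
    Function.Surjective (centralProjection L hq) := fun l ↦
  let ⟨p, hpB, hpl⟩ := hB l
  ⟨⟨p, hpB⟩, (centralProjection_eq_iff hq).2 hpl⟩

theorem subsingleton_inter_line [HasLines P L] (hB : IsBlockingSet L B) (hfin : B.Finite) {q : P}
    (hq : q ∉ B) (hcard : B.ncard ≤ lineCount L q) {l : L} (hql : q ∈ l) :
    (B ∩ {p | p ∈ l}).Subsingleton := by
  have : Finite B := hfin
  have hbij : Function.Bijective (centralProjection L hq) :=
    (hB.centralProjection_surjective hq).bijective_of_nat_card_le hcard
  rintro a ⟨haB, hal⟩ b ⟨hbB, hbl⟩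
  have ha : centralProjection L hq ⟨a, haB⟩ = ⟨l, hql⟩ := (centralProjection_eq_iff hq).2 hal
  have hb : centralProjection L hq ⟨b, hbB⟩ = ⟨l, hql⟩ := (centralProjection_eq_iff hq).2 hbl
  exact congrArg Subtype.val (hbij.injective (ha.trans hb.symm))

theorem exists_eq_line_of_ncard_le [Finite P] [Finite L] [ProjectivePlane P L]
    (hB : IsBlockingSet L B) (hcard : B.ncard ≤ ProjectivePlane.order P L + 1) :
    ∃ l : L, B = {p | p ∈ l} := by
  obtain ⟨-, -, -, l₀, -⟩ := ProjectivePlane.exists_config (P := P) (L := L)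
  have : Nonempty L := ⟨l₀⟩
  obtain ⟨a, haB, b, hbB, hab⟩ := hB.nontrivial
  obtain ⟨hal, hbl⟩ := HasLines.mkLine_ax (L := L) hab
  set l : L := HasLines.mkLine hab
  have hline_subset : {p | p ∈ l} ⊆ B := fun q hql ↦ by
    by_contra hqB
    have hcard_pencil : B.ncard ≤ lineCount L q := by rwa [ProjectivePlane.lineCount_eq]
    exact hab (hB.subsingleton_inter_line B.toFinite hqB hcard_pencil hql ⟨haB, hal⟩ ⟨hbB, hbl⟩)
  have hcard_line : B.ncard ≤ {p | p ∈ l}.ncard :=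
    hcard.trans_eq (ProjectivePlane.pointCount_eq P l).symm
  exact ⟨l, (Set.eq_of_subset_of_ncard_le hline_subset hcard_line).symm⟩

end IsBlockingSet

end

/-- A blocking set in a projective plane of order `n` has size exactly `n + 1` if and only if
it is the set of points of some line of the plane. -/
theorem statement6 (P L : Type) [Membership P L] [Finite P] [Finite L]
    [Configuration.ProjectivePlane P L] (n : ℕ)
    (horder : Configuration.ProjectivePlane.order P L = n)
    (B : Set P) (hB : ∀ l : L, ∃ p ∈ B, p ∈ l) :
    B.ncard = n + 1 ↔ ∃ l : L, B = {p : P | p ∈ l} := by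
  subst horder
  constructor
  · intro hcard
    exact IsBlockingSet.exists_eq_line_of_ncard_le hB hcard.le
  · rintro ⟨l, rfl⟩
    exact ProjectivePlane.pointCount_eq P l
end

section
/- Let C be a set of exactly q + 1 points in a projective plane of order q, let Q be a point of C, and let B be a set of points with Q ∉ B that meets every line of the plane which does not pass through Q and contains at least one point of C \ {Q}. Then |B| ≥ q. -/
/-!
If some point `p ≠ Q` of `C` lies outside `B`, then the lines through `p` pairwise meet only in
`p`, and `insert Q B` meets each of them away from `p`: the line `pQ` in `Q`, the others in `B`.
Hence `|B| + 1` is at least the number of lines through `p`, which is `q + 1` in a plane of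
order `q`. Otherwise `C \ {Q} ⊆ B`, and counting points suffices.
-/

open Configuration

section Nondegenerate

variable {P L : Type*} [Membership P L] [Nondegenerate P L] {B C X : Set P} {p Q : P} {q : ℕ}

theorem lineCount_le_ncard_of_forall_exists_mem (hX : X.Finite) (hpX : p ∉ X)
    (hmeet : ∀ l : L, p ∈ l → ∃ x ∈ X, x ∈ l) : lineCount L p ≤ X.ncard := by
  have hmeet' (l : {l : L // p ∈ l}) : ∃ x : X, (x : P) ∈ l.1 := by
    simpa using hmeet l.1 l.2
  choose meetingPoint hmem using hmeet'
  have hinj : Function.Injective meetingPoint := by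
    intro l m hlm
    have hne : p ≠ meetingPoint l := fun h ↦ hpX (h ▸ (meetingPoint l).2)
    have hm : (meetingPoint l : P) ∈ m.1 := hlm ▸ hmem m
    exact Subtype.ext ((Nondegenerate.eq_or_eq l.2 (hmem l) m.2 hm).resolve_left hne)
  have : Finite X := hX
  exact Nat.card_le_card_of_injective meetingPoint hinj

theorem lineCount_le_ncard_add_one (hB : B.Finite) (hpQ : p ≠ Q) (hpB : p ∉ B)
    (hmeet : ∀ l : L, Q ∉ l → p ∈ l → ∃ b ∈ B, b ∈ l) : lineCount L p ≤ B.ncard + 1 := by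
  have hmeet' (l : L) (hpl : p ∈ l) : ∃ x ∈ insert Q B, x ∈ l := by
    by_cases hQl : Q ∈ l
    · exact ⟨Q, Set.mem_insert Q B, hQl⟩
    · obtain ⟨b, hb, hbl⟩ := hmeet l hQl hpl
      exact ⟨b, Set.mem_insert_of_mem Q hb, hbl⟩
  calc lineCount L p ≤ (insert Q B).ncard :=
        lineCount_le_ncard_of_forall_exists_mem (hB.insert Q) (by simp [hpQ, hpB]) hmeet'
    _ ≤ B.ncard + 1 := Set.ncard_insert_le Q B

theorem statement8_general (hBfin : B.Finite) (hC : q ≤ (C \ {Q}).ncard)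
    (hcount : ∀ p ∈ C \ {Q}, q + 1 ≤ lineCount L p)
    (hB : ∀ l : L, Q ∉ l → (∃ p ∈ C \ {Q}, p ∈ l) → ∃ b ∈ B, b ∈ l) :
    q ≤ B.ncard := by
  by_cases hCB : C \ {Q} ⊆ B
  · exact hC.trans (Set.ncard_le_ncard hCB hBfin)
  · obtain ⟨p, hpC, hpB⟩ := Set.not_subset.mp hCB
    have hle : lineCount L p ≤ B.ncard + 1 :=
      lineCount_le_ncard_add_one hBfin hpC.2 hpB fun l hQl hpl ↦ hB l hQl ⟨p, hpC, hpl⟩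
    exact Nat.le_of_add_le_add_right ((hcount p hpC).trans hle)

end Nondegenerate

/-- Let `C` be a set of exactly `q + 1` points in a projective plane of order `q`, let `Q ∈ C`,
and let `B` be a set of points with `Q ∉ B` meeting every line of the plane which does not pass
through `Q` and contains at least one point of `C \ {Q}`. Then `|B| ≥ q`. -/
theorem statement8 (P L : Type) [Membership P L] [Finite P] [Finite L]
    [Configuration.ProjectivePlane P L] (q : ℕ)
    (horder : Configuration.ProjectivePlane.order P L = q)
    (C B : Set P) (Q : P) (hC : C.ncard = q + 1) (hQC : Q ∈ C) (hQB : Q ∉ B)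
    (hB : ∀ l : L, Q ∉ l → (∃ p ∈ C \ {Q}, p ∈ l) → ∃ b ∈ B, b ∈ l) :
    q ≤ B.ncard :=
  statement8_general B.toFinite (by simp [Set.ncard_sdiff_singleton_of_mem hQC, hC])
    (fun p _ ↦ by rw [ProjectivePlane.lineCount_eq, horder]) hB
end

section
/- Let Q be a point of a projective plane of order n and let B be a set of points of the plane with Q ∉ B that meets every line of the plane not passing through Q. Then |B| ≥ n, and if |B| = n then B = ℓ \ {Q} for some line ℓ of the plane passing through Q. -/
/-!
Let `m` be a line through `Q` and let `p ≠ Q` be a point of `m` outside `B`. The `n` lines through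
`p` other than `m` miss `Q`, so each of them meets `B`; as they meet pairwise, and meet `m`, only in
`p ∉ B`, this gives `n` distinct points of `B` off `m`. Hence for every line `m` through `Q`, either
`B` contains the `n` points of `m \ {Q}`, or it has at least `n` points off `m`. Both cases give
`|B| ≥ n`, and the second is impossible if `|B| = n` and `m` joins `Q` to a point of `B`.
-/

open Configuration

section Incidence

variable {P L : Type*} [Membership P L]

theorem ncard_lines_le_ncard_of_concurrent [Nondegenerate P L] {p : P} {S : Set L} {B : Set P}
    (hBfin : B.Finite) (hpB : p ∉ B) (hpS : ∀ l ∈ S, p ∈ l) (hSB : ∀ l ∈ S, ∃ b ∈ B, b ∈ l) :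
    S.ncard ≤ B.ncard := by
  have : Nonempty P := ⟨p⟩
  choose! f hfB hfl using hSB
  refine Set.ncard_le_ncard_of_injOn f hfB (fun l hl k hk hlk ↦ ?_) hBfin
  have hfk : f l ∈ k := hlk ▸ hfl k hk
  exact (Nondegenerate.eq_or_eq (hpS l hl) (hfl l hl) (hpS k hk) hfk).resolve_left
    (ne_of_mem_of_not_mem (hfB l hl) hpB).symm

variable [ProjectivePlane P L]

variable (L) in
theorem exists_line_through (p : P) : ∃ l : L, p ∈ l := by
  obtain ⟨p₁, p₂, -, -, l₂, -, hp₁l₂, -, -, hp₂l₂, -⟩ :=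
    ProjectivePlane.exists_config (P := P) (L := L)
  have : Nontrivial P := ⟨p₁, p₂, (ne_of_mem_of_not_mem hp₂l₂ hp₁l₂).symm⟩
  obtain ⟨q, hqp⟩ := exists_ne p
  exact ⟨HasLines.mkLine hqp, (HasLines.mkLine_ax hqp).2⟩

variable [Finite P] [Finite L]

theorem ncard_lines_sdiff_singleton {p : P} {m : L} (hpm : p ∈ m) :
    ({l : L | p ∈ l} \ {m}).ncard = ProjectivePlane.order P L := by
  have hcount : {l : L | p ∈ l}.ncard = ProjectivePlane.order P L + 1 :=
    ProjectivePlane.lineCount_eq L p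
  have hmem : m ∈ {l : L | p ∈ l} := hpm
  rw [Set.ncard_sdiff_singleton_of_mem hmem, hcount, Nat.add_sub_cancel]

theorem ncard_points_sdiff_singleton {l : L} {q : P} (hql : q ∈ l) :
    ({p : P | p ∈ l} \ {q}).ncard = ProjectivePlane.order P L := by
  have hcount : {p : P | p ∈ l}.ncard = ProjectivePlane.order P L + 1 :=
    ProjectivePlane.pointCount_eq P l
  have hmem : q ∈ {p : P | p ∈ l} := hql
  rw [Set.ncard_sdiff_singleton_of_mem hmem, hcount, Nat.add_sub_cancel]

end Incidence

/-- `B` meets every line not passing through `Q`. For `Q ∉ B` this is a blocking set of the dual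
affine plane left after removing `Q` and the lines through it; `Q ∈ B` is not excluded here. -/
def BlocksLinesAvoiding {P : Type*} (L : Type*) [Membership P L] (Q : P) (B : Set P) : Prop :=
  ∀ l : L, Q ∉ l → ∃ b ∈ B, b ∈ l

namespace BlocksLinesAvoiding

variable {P L : Type*} [Membership P L] {Q : P} {B : Set P}

theorem exists_mem_sdiff [Nondegenerate P L] (hB : BlocksLinesAvoiding L Q B) {p : P} {l m : L}
    (hpB : p ∉ B) (hpQ : p ≠ Q) (hpm : p ∈ m) (hQm : Q ∈ m) (hpl : p ∈ l) (hlm : l ≠ m) :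
    ∃ b ∈ B \ {x | x ∈ m}, b ∈ l := by
  have hQl : Q ∉ l := fun hQl ↦
    (Nondegenerate.eq_or_eq hpl hQl hpm hQm).elim hpQ hlm
  obtain ⟨b, hbB, hbl⟩ := hB l hQl
  have hbm : b ∉ m := fun hbm ↦
    (Nondegenerate.eq_or_eq hpl hbl hpm hbm).elim (ne_of_mem_of_not_mem hbB hpB).symm hlm
  exact ⟨b, ⟨hbB, hbm⟩, hbl⟩

variable [ProjectivePlane P L] [Finite P] [Finite L]

theorem sdiff_subset_or_order_le_ncard_sdiff (hB : BlocksLinesAvoiding L Q B) {m : L}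
    (hQm : Q ∈ m) :
    {p | p ∈ m} \ {Q} ⊆ B ∨ ProjectivePlane.order P L ≤ (B \ {p | p ∈ m}).ncard := by
  refine or_iff_not_imp_left.mpr fun hsub ↦ ?_
  obtain ⟨p, ⟨hpm, hpQ⟩, hpB⟩ := Set.not_subset.mp hsub
  rw [← ncard_lines_sdiff_singleton (L := L) hpm]
  exact ncard_lines_le_ncard_of_concurrent (Set.toFinite _) (fun hp ↦ hpB hp.1)
    (fun l hl ↦ hl.1) fun l hl ↦ hB.exists_mem_sdiff hpB hpQ hpm hQm hl.1 hl.2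

theorem order_le_ncard (hB : BlocksLinesAvoiding L Q B) :
    ProjectivePlane.order P L ≤ B.ncard := by
  obtain ⟨m, hQm⟩ := exists_line_through L Q
  obtain hsub | hle := hB.sdiff_subset_or_order_le_ncard_sdiff hQm
  · exact (ncard_points_sdiff_singleton hQm).ge.trans (Set.ncard_le_ncard hsub)
  · exact hle.trans (Set.ncard_le_ncard Set.sdiff_subset)

theorem eq_sdiff_singleton_of_ncard_eq_order (hB : BlocksLinesAvoiding L Q B)
    (hcard : B.ncard = ProjectivePlane.order P L) {m : L} {b : P} (hQm : Q ∈ m) (hbB : b ∈ B)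
    (hbm : b ∈ m) : B = {p | p ∈ m} \ {Q} := by
  have hlt : (B \ {p | p ∈ m}).ncard < B.ncard :=
    Set.ncard_lt_ncard (Set.sdiff_ssubset_left_iff.mpr ⟨b, hbB, hbm⟩)
  have hsub : {p | p ∈ m} \ {Q} ⊆ B :=
    (hB.sdiff_subset_or_order_le_ncard_sdiff hQm).resolve_right (hcard ▸ hlt).not_ge
  refine (Set.eq_of_subset_of_ncard_le hsub ?_).symm
  rw [hcard, ncard_points_sdiff_singleton hQm]

theorem exists_eq_sdiff_singleton (hB : BlocksLinesAvoiding L Q B) (hQB : Q ∉ B)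
    (hcard : B.ncard = ProjectivePlane.order P L) :
    ∃ l : L, Q ∈ l ∧ B = {p | p ∈ l} \ {Q} := by
  have hpos : 0 < B.ncard := hcard ▸ pos_of_gt (ProjectivePlane.one_lt_order P L)
  obtain ⟨b, hbB⟩ := Set.nonempty_of_ncard_ne_zero hpos.ne'
  obtain ⟨hbl, hQl⟩ := HasLines.mkLine_ax (L := L) (ne_of_mem_of_not_mem hbB hQB)
  exact ⟨_, hQl, hB.eq_sdiff_singleton_of_ncard_eq_order hcard hQl hbB hbl⟩

end BlocksLinesAvoiding

/-- Let `Q` be a point of a projective plane of order `n` and let `B` be a set of points with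
`Q ∉ B` meeting every line not passing through `Q`. Then `|B| ≥ n`, and if `|B| = n` then
`B = ℓ \ {Q}` for some line `ℓ` through `Q`. -/
theorem statement9 (P L : Type) [Membership P L] [Finite P] [Finite L]
    [Configuration.ProjectivePlane P L] (n : ℕ)
    (horder : Configuration.ProjectivePlane.order P L = n)
    (Q : P) (B : Set P) (hQB : Q ∉ B)
    (hB : ∀ l : L, Q ∉ l → ∃ b ∈ B, b ∈ l) :
    n ≤ B.ncard ∧ (B.ncard = n → ∃ l : L, Q ∈ l ∧ B = {p : P | p ∈ l} \ {Q}) := by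
  subst horder
  have hblocks : BlocksLinesAvoiding L Q B := hB
  exact ⟨hblocks.order_le_ncard, hblocks.exists_eq_sdiff_singleton hQB⟩
end
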